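/- arXiv:1410.6740 — 2 statements merged into one kernel-verified Lean document; each statement's English description precedes it below -/
import Mathlib

section
/- Let F : E → B be a row-finite Kumjian-Pask fibration and let G_F carry the topology generated by the sets Z(μ,ν). Then for all morphisms μ, ν of E with s(μ) = s(ν), the range map r restricts to a homeomorphism from Z(μ,ν) onto Z(μ) and the source map s restricts to a homeomorphism from Z(μ,ν) onto Z(ν); consequently G_F is an étale groupoid (it has a basis of open bisections). -/
/-!
The source map sends `[μ,ν,x]` to `x`, so it is a bijection from `Z(μ,ν)` onto `Z(ν)`, and the
range map on `Z(μ,ν)` is the source map followed by the translation `ind_μ ∘ res_ν`, a bijection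
from `Z(ν)` onto `Z(μ)`. Four facts make these bijections bicontinuous and the sets `Z(μ,ν)` a
basis.

* Right Ore squares in `B`, lifted along an infinite path, show that around each of its points
  `Z(ν) ∩ Z(l)` contains some `Z(ν ∘ γ)` (`ZMor_refine`).
* `ind_μ ∘ res_ν` carries `Z(ν ∘ γ)` onto `Z(μ ∘ γ)` (`Translates.inPathOf_comp`, used in both
  directions).
* `[μ,ν,x] = [μ ∘ γ, ν ∘ γ, x]` for `x ∈ Z(ν ∘ γ)` (`mk_comp_eq`), so that `Z(μ ∘ γ, ν ∘ γ)` is the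
  part of `Z(μ,ν)` lying over `Z(ν ∘ γ)`.
* Equality in `G_F` is an open condition (`exists_nhd_of_eq`).

Everything about translation rests on the uniqueness of lifted factorizations (`over_cancel`): an
infinite path is determined by its values on the multiples of a fixed `F μ`, which are cofinal by
the Ore condition (`InfPath.ext_of_cofinal`), and `res_ν` is determined by cancelling `ν`
(`IndRel.obj_eq`). Existence of translates is supplied by the range map itself.
-/

open CategoryTheory

universe v u v' u' v'' u''

namespace DCFpaper

variable {E : Type u} [Category.{v} E] {B : Type u'} [Category.{v'} B]

/-- Equality of morphisms with possibly different (but equal) endpoints. -/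
def MorEq {C : Type u''} [Category.{v''} C] {W X Y Z : C} (f : W ⟶ X) (g : Y ⟶ Z) : Prop :=
  ∃ (h₁ : W = Y) (h₂ : X = Z), f = eqToHom h₁ ≫ g ≫ eqToHom h₂.symm

/-- A lift of a factorization `F φ = l ≫ ρ` to a factorization of `φ`. -/
structure ConducheLift (F : E ⥤ B) {Y X : E} (φ : Y ⟶ X) {M : B}
    (l : F.obj Y ⟶ M) (ρ : M ⟶ F.obj X) where
  mid : E
  lam : Y ⟶ mid
  rho : mid ⟶ X
  comp_eq : lam ≫ rho = φ
  obj_eq : F.obj mid = M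
  map_lam : F.map lam = l ≫ eqToHom obj_eq.symm
  map_rho : F.map rho = eqToHom obj_eq ≫ ρ

/-- Discrete Conduché fibration: unique factorization lifting. -/
def IsDCF (F : E ⥤ B) : Prop :=
  ∀ {Y X : E} (φ : Y ⟶ X) {M : B} (l : F.obj Y ⟶ M) (ρ : M ⟶ F.obj X),
    F.map φ = l ≫ ρ →
      Nonempty (ConducheLift F φ l ρ) ∧ ∀ L L' : ConducheLift F φ l ρ, L = L'

/-- Right Ore condition: every cospan can be completed to a commutative square. -/
def RightOre (C : Type u'') [Category.{v''} C] : Prop :=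
  ∀ {A X D : C} (m : A ⟶ D) (n : X ⟶ D),
    ∃ (P : C) (p : P ⟶ A) (q : P ⟶ X), p ≫ m = q ≫ n

/-- Strongly right Ore. -/
def StronglyRightOre (C : Type u'') [Category.{v''} C] : Prop :=
  RightOre C ∧
    ∀ {A X D Z₁ Z₂ : C} (m : A ⟶ D) (n : X ⟶ D)
      (p₁ : Z₁ ⟶ A) (q₁ : Z₁ ⟶ X) (p₂ : Z₂ ⟶ A) (q₂ : Z₂ ⟶ X),
      p₁ ≫ m = q₁ ≫ n → p₂ ≫ m = q₂ ≫ n →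
        ∃ (W : C) (a : W ⟶ Z₁) (b : W ⟶ Z₂), a ≫ p₁ = b ≫ p₂ ∧ a ≫ q₁ = b ≫ q₂

/-- Locally split: each induced slice functor admits a section. -/
def LocallySplit (F : E ⥤ B) : Prop :=
  ∀ X : E, ∃ x : Over (F.obj X) ⥤ Over X, x ⋙ Over.post F = 𝟭 (Over (F.obj X))

/-- Kumjian-Pask fibration. -/
def IsKPF (F : E ⥤ B) : Prop :=
  IsDCF F ∧ LocallySplit F ∧ StronglyRightOre B

/-- Row-finite functor. -/
def RowFinite (F : E ⥤ B) : Prop :=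
  ∀ (X : E) {M : B} (b : M ⟶ F.obj X),
    {p : Σ Y : E, Y ⟶ X | ∃ h : F.obj p.1 = M, F.map p.2 = eqToHom h ≫ b}.Finite

/-- Strongly surjective functor. -/
def StronglySurjective (F : E ⥤ B) : Prop :=
  Function.Surjective F.obj ∧
    ∀ (X : E) {M : B} (b : M ⟶ F.obj X),
      ∃ (Y : E) (α : Y ⟶ X) (h : F.obj Y = M), F.map α = eqToHom h ≫ b

/-- An infinite path to `X`: a section of the induced slice functor. -/
structure InfPath (F : E ⥤ B) (X : E) where
  fn : Over (F.obj X) ⥤ Over X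
  sec : fn ⋙ Over.post F = 𝟭 (Over (F.obj X))

/-- The infinite path space `F^∞`. -/
def FInf (F : E ⥤ B) := Σ X : E, InfPath F X

/-- `x ∈ Z(μ)` for `x` an infinite path to the target of `μ`. -/
abbrev InPathOf {F : E ⥤ B} {Y X : E} (μ : Y ⟶ X) (x : InfPath F X) : Prop :=
  x.fn.obj (Over.mk (F.map μ)) = Over.mk μ

/-- `Z(X) ⊆ F^∞`. -/
def ZObj (F : E ⥤ B) (X : E) : Set (FInf F) := {p | p.1 = X}

/-- `Z(μ) ⊆ F^∞`. -/
def ZMor (F : E ⥤ B) {Y X : E} (μ : Y ⟶ X) : Set (FInf F) :=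
  {p | ∃ h : p.1 = X, InPathOf μ (h ▸ p.2)}

/-- The basic sets `Z(μ)`. -/
def pathBasis (F : E ⥤ B) : Set (Set (FInf F)) :=
  {S | ∃ (Y X : E) (μ : Y ⟶ X), S = ZMor F μ}

/-- The topology on `F^∞` generated by the sets `Z(μ)`. -/
def pathTopology (F : E ⥤ B) : TopologicalSpace (FInf F) :=
  TopologicalSpace.generateFrom (pathBasis F)

/-- The morphism `(u, g) : (g ≫ u) ⟶ u` of a slice category. -/
def oHomW {T : Type u''} [Category.{v''} T] {X A A' : T} {u : A ⟶ X} {v : A' ⟶ X}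
    (g : A' ⟶ A) (w : g ≫ u = v) : Over.mk v ⟶ Over.mk u :=
  Over.homMk g w

/-- The defining relation between `w = res_μ x` and `x = ind_μ w`, on objects:
`x(a ∘ F μ) = μ ∘ w(a)` for all `a`. -/
def IndRel (F : E ⥤ B) {Y X : E} (μ : Y ⟶ X) (w : InfPath F Y) (x : InfPath F X) : Prop :=
  ∀ {A : B} (a : A ⟶ F.obj Y),
    x.fn.obj (Over.mk (a ≫ F.map μ)) = Over.mk ((w.fn.obj (Over.mk a)).hom ≫ μ)

/-- `w = res_μ x`. -/
def ResRel (F : E ⥤ B) {Y X : E} (μ : Y ⟶ X) (x : InfPath F X) (w : InfPath F Y) : Prop :=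
  InPathOf μ x ∧ IndRel F μ w x

/-- `q = ind_μ p`, at the level of `F^∞`. -/
def IndRelP (F : E ⥤ B) {Y X : E} (μ : Y ⟶ X) (pw px : FInf F) : Prop :=
  ∃ (hw : pw.1 = Y) (hx : px.1 = X),
    InPathOf μ (hx ▸ px.2) ∧ IndRel F μ (hw ▸ pw.2) (hx ▸ px.2)

/-- `pw = res_μ px`, at the level of `F^∞`. -/
def ResRelP (F : E ⥤ B) {Y X : E} (μ : Y ⟶ X) (px pw : FInf F) : Prop :=
  ∃ (hw : pw.1 = Y) (hx : px.1 = X), ResRel F μ (hx ▸ px.2) (hw ▸ pw.2)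

/-- `z' = ind_μ (res_ν z)`. -/
def Translates (F : E ⥤ B) {W U V : E} (μ : W ⟶ U) (ν : W ⟶ V)
    (z : InfPath F V) (z' : InfPath F U) : Prop :=
  ∃ w : InfPath F W, ResRel F ν z w ∧ InPathOf μ z' ∧ IndRel F μ w z'

/-- `q = ind_μ (res_ν p)`, at the level of `F^∞`. -/
def TranslatesP (F : E ⥤ B) {W U V : E} (μ : W ⟶ U) (ν : W ⟶ V)
    (p q : FInf F) : Prop :=
  ∃ (hp : p.1 = V) (hq : q.1 = U), Translates F μ ν (hp ▸ p.2) (hq ▸ q.2)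

/-- An element `(μ, ν, x)` of `𝒢_F`. -/
structure PreG (F : E ⥤ B) where
  W : E
  U : E
  V : E
  μ : W ⟶ U
  ν : W ⟶ V
  x : InfPath F V
  mem : InPathOf ν x

/-- The relation `∼` on `𝒢_F`. -/
def GERel (F : E ⥤ B) (g g' : PreG F) : Prop :=
  (∃ hV : g.V = g'.V, hV ▸ g.x = g'.x) ∧
  (∃ (Λ : E) (lam : Λ ⟶ g.V),
     (⟨g.V, g.x⟩ : FInf F) ∈ ZMor F lam ∧
     ZMor F lam ⊆ ZMor F g.ν ∩ ZMor F g'.ν ∧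
     ∀ p ∈ ZMor F lam, ∀ q : FInf F,
       TranslatesP F g.μ g.ν p q ↔ TranslatesP F g'.μ g'.ν p q) ∧
  (∃ (M : B) (a : M ⟶ F.obj g.W) (b : M ⟶ F.obj g'.W),
     MorEq (a ≫ F.map g.μ) (b ≫ F.map g'.μ) ∧ MorEq (a ≫ F.map g.ν) (b ≫ F.map g'.ν))

/-- The groupoid `G_F` as a quotient set. -/
def GF (F : E ⥤ B) := Quot (GERel F)

/-- `k` is a composite of `g` and `h` in `G_F` (at the level of representatives). -/
def CompRel (F : E ⥤ B) (g h k : PreG F) : Prop :=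
  TranslatesP F h.μ h.ν ⟨h.V, h.x⟩ ⟨g.V, g.x⟩ ∧
  ∃ (P : E) (γ : P ⟶ g.W) (η : P ⟶ h.W) (hUV : h.U = g.V),
    γ ≫ g.ν = (η ≫ h.μ) ≫ eqToHom hUV ∧
    InPathOf (γ ≫ g.ν) g.x ∧
    ∃ mem : InPathOf (η ≫ h.ν) h.x,
      GERel F k ⟨P, g.U, h.V, γ ≫ g.μ, η ≫ h.ν, h.x, mem⟩

/-- The basic set `Z(μ,ν) ⊆ G_F`. -/
def ZPair (F : E ⥤ B) {W U V : E} (μ : W ⟶ U) (ν : W ⟶ V) : Set (GF F) :=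
  {g | ∃ (x : InfPath F V) (mem : InPathOf ν x),
        g = Quot.mk (GERel F) ⟨W, U, V, μ, ν, x, mem⟩}

/-- The basic sets `Z(μ,ν)`. -/
def pairBasis (F : E ⥤ B) : Set (Set (GF F)) :=
  {s | ∃ (W U V : E) (μ : W ⟶ U) (ν : W ⟶ V), s = ZPair F μ ν}

/-- The topology on `G_F`. -/
def gTopology (F : E ⥤ B) : TopologicalSpace (GF F) :=
  TopologicalSpace.generateFrom (pairBasis F)

/-- A subcategory of a category: a class of objects and morphisms closed under
identities and composition. -/
structure Subcat (C : Type u'') [Category.{v''} C] where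
  objs : Set C
  homs : ∀ ⦃M N : C⦄, (M ⟶ N) → Prop
  id_mem : ∀ {M : C}, M ∈ objs → homs (𝟙 M)
  comp_mem : ∀ {M N P : C} {f : M ⟶ N} {g : N ⟶ P}, homs f → homs g → homs (f ≫ g)
  src_mem : ∀ {M N : C} {f : M ⟶ N}, homs f → M ∈ objs
  tgt_mem : ∀ {M N : C} {f : M ⟶ N}, homs f → N ∈ objs

instance Subcat.cat {C : Type u''} [Category.{v''} C] (S : Subcat C) : Category S.objs where
  Hom M N := {f : M.1 ⟶ N.1 // S.homs f}
  id M := ⟨𝟙 M.1, S.id_mem M.2⟩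
  comp f g := ⟨f.1 ≫ g.1, S.comp_mem f.2 g.2⟩
  id_comp f := Subtype.ext (Category.id_comp f.1)
  comp_id f := Subtype.ext (Category.comp_id f.1)
  assoc f g h := Subtype.ext (Category.assoc f.1 g.1 h.1)

/-- The inclusion functor of a subcategory. -/
def Subcat.ι {C : Type u''} [Category.{v''} C] (S : Subcat C) : S.objs ⥤ C where
  obj M := M.1
  map f := f.1

/-- `f` is (up to the identifications of objects) the image of a morphism of `E`. -/
def InImage (F : E ⥤ B) {M N : B} (f : M ⟶ N) : Prop :=
  ∃ (Y X : E) (μ : Y ⟶ X) (hY : F.obj Y = M) (hX : F.obj X = N),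
    F.map μ = eqToHom hY ≫ f ≫ eqToHom hX.symm

/-- An aperiodic infinite path. -/
def AperiodicPath (F : E ⥤ B) {X : E} (x : InfPath F X) : Prop :=
  ∀ {Y Y' : E} (α : Y ⟶ X) (β : Y' ⟶ X) (w : FInf F),
    ResRelP F α ⟨X, x⟩ w → ResRelP F β ⟨X, x⟩ w → MorEq α β

/-- Spans in a category, as a type. -/
def SpanT (C : Type u'') [Category.{v''} C] := Σ (P Q R : C), (P ⟶ Q) × (P ⟶ R)


/-- Pairs of composable elements of `G_F`. -/
def ComposablePairs (F : E ⥤ B) : Set (GF F × GF F) :=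
  {p | ∃ g h : PreG F, p.1 = Quot.mk (GERel F) g ∧ p.2 = Quot.mk (GERel F) h ∧
        TranslatesP F h.μ h.ν ⟨h.V, h.x⟩ ⟨g.V, g.x⟩}

/-! ### Lifting of factorizations, in slice categories -/

/-- Uniqueness of lifted factorizations, read in the slice `E/X`: two morphisms out of the same
object which become equal after applying `F` are equal, targets included. -/
lemma over_cancel {F : E ⥤ B} (hF : IsDCF F) {X : E} {o p p' : Over X} (f : o ⟶ p) (f' : o ⟶ p')
    (h : (Over.post F).obj p = (Over.post F).obj p')
    (hm : (Over.post F).map f = (Over.post F).map f' ≫ eqToHom h.symm) :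
    p = p' ∧ HEq f f' := by
  have hl : F.obj p.left = F.obj p'.left := congrArg Comma.left h
  have e1 : F.map f.left = F.map f'.left ≫ eqToHom hl.symm := by
    have := congrArg Over.Hom.left hm
    rw [Over.comp_left, Over.eqToHom_left] at this
    exact this
  have e2 : F.map p.hom = eqToHom hl ≫ F.map p'.hom := by
    have := Over.w (eqToHom h)
    rw [Over.eqToHom_left] at this
    exact this.symm
  have e3 : F.map o.hom = F.map f'.left ≫ F.map p'.hom := by
    rw [← F.map_comp, Over.w]
  let L : ConducheLift F o.hom (F.map f'.left) (F.map p'.hom) :=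
    ⟨p.left, f.left, p.hom, Over.w f, hl, e1, e2⟩
  let L' : ConducheLift F o.hom (F.map f'.left) (F.map p'.hom) :=
    ⟨p'.left, f'.left, p'.hom, Over.w f', rfl, by simp, by simp⟩
  have hL : L = L' := (hF o.hom (F.map f'.left) (F.map p'.hom) e3).2 L L'
  have key := congrArg (fun K : ConducheLift F o.hom (F.map f'.left) (F.map p'.hom) =>
    (⟨Over.mk K.rho, Over.homMk K.lam K.comp_eq⟩ : Σ q : Over X, o ⟶ q)) hL
  have key' : (⟨p, f⟩ : Σ q : Over X, o ⟶ q) = ⟨p', f'⟩ := key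
  exact Sigma.mk.inj_iff.1 key'

/-- Although `ν` need not be monic, it can be cancelled between morphisms with the same image
in `B`. -/
lemma mk_cancel {F : E ⥤ B} (hF : IsDCF F) {A A' W V : E} {α : A ⟶ W} {α' : A' ⟶ W} (ν : W ⟶ V)
    (h : Over.mk (α ≫ ν) = Over.mk (α' ≫ ν))
    (hα : Over.mk (F.map α) = Over.mk (F.map α')) : Over.mk α = Over.mk α' := by
  obtain rfl : A = A' := congrArg Comma.left h
  have h1 : α ≫ ν = α' ≫ ν := by
    have := Over.w (eqToHom h)
    rw [Over.eqToHom_left] at this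
    simpa using this.symm
  have h2 : F.map α = F.map α' := by
    have := Over.w (eqToHom hα)
    rw [Over.eqToHom_left] at this
    simpa using this.symm
  let f : Over.mk (α ≫ ν) ⟶ Over.mk ν := Over.homMk α
  let f' : Over.mk (α ≫ ν) ⟶ Over.mk ν := Over.homMk α' h1.symm
  have := (over_cancel hF f f' rfl (by
    rw [eqToHom_refl, Category.comp_id]
    exact Over.OverMorphism.ext h2)).2
  rw [show α = α' from congrArg CommaMorphism.left (eq_of_heq this)]

/-! ### Infinite paths -/

lemma InfPath.post_obj {F : E ⥤ B} {X : E} (x : InfPath F X) (o : Over (F.obj X)) :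
    (Over.post F).obj (x.fn.obj o) = o :=
  Functor.congr_obj x.sec o

lemma InfPath.post_map {F : E ⥤ B} {X : E} (x : InfPath F X) {o p : Over (F.obj X)} (m : o ⟶ p) :
    (Over.post F).map (x.fn.map m) =
      eqToHom (x.post_obj o) ≫ m ≫ eqToHom (x.post_obj p).symm :=
  Functor.congr_hom x.sec m

/-- The values of an infinite path propagate along slice morphisms. -/
lemma InfPath.agree {F : E ⥤ B} (hF : IsDCF F) {X : E} (x y : InfPath F X)
    {o p : Over (F.obj X)} (m : o ⟶ p) (h : x.fn.obj o = y.fn.obj o) :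
    x.fn.obj p = y.fn.obj p ∧ HEq (x.fn.map m) (y.fn.map m) := by
  obtain ⟨h1, h2⟩ := over_cancel hF (x.fn.map m) (eqToHom h ≫ y.fn.map m)
    ((x.post_obj p).trans (y.post_obj p).symm) (by
      rw [Functor.map_comp, x.post_map, y.post_map, eqToHom_map]
      simp)
  exact ⟨h1, h2.trans (eqToHom_comp_heq _ _)⟩

/-- By the Ore condition the multiples of `F μ` are cofinal in the slice, so an infinite path is
determined by its values on them. -/
lemma InfPath.ext_of_cofinal {F : E ⥤ B} (hF : IsDCF F) (hB : RightOre B) {Y X : E} (μ : Y ⟶ X)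
    {x y : InfPath F X}
    (h : ∀ {A : B} (a : A ⟶ F.obj Y),
      x.fn.obj (Over.mk (a ≫ F.map μ)) = y.fn.obj (Over.mk (a ≫ F.map μ))) : x = y := by
  have hobj : ∀ o, x.fn.obj o = y.fn.obj o := by
    intro o
    obtain ⟨P, p, q, hpq⟩ := hB o.hom (F.map μ)
    exact (x.agree hF y (Over.homMk p hpq : Over.mk (q ≫ F.map μ) ⟶ o) (h q)).1
  have : x.fn = y.fn :=
    CategoryTheory.Functor.hext hobj fun o p m => (x.agree hF y m (hobj o)).2
  cases x; cases y; cases this; rfl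

lemma InPathOf.of_comp {F : E ⥤ B} (hF : IsDCF F) {P Y X : E} {γ : P ⟶ Y} {ν : Y ⟶ X}
    {x : InfPath F X} (h : InPathOf (γ ≫ ν) x) : InPathOf ν x := by
  let m : Over.mk (F.map (γ ≫ ν)) ⟶ Over.mk (F.map ν) := Over.homMk (F.map γ) (by simp)
  let f : Over.mk (γ ≫ ν) ⟶ Over.mk ν := Over.homMk γ
  refine ((over_cancel hF f (eqToHom h.symm ≫ x.fn.map m)
    (x.post_obj (Over.mk (F.map ν))).symm ?_).1).symm
  rw [Functor.map_comp, x.post_map, eqToHom_map]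
  ext
  simp [f, m, Over.eqToHom_left]
  change F.map γ = 𝟙 _ ≫ F.map γ ≫ 𝟙 _
  simp

/-- If an infinite path runs through both `ν` and `l`, then it runs through a common extension. -/
lemma InPathOf.refine {F : E ⥤ B} (hB : RightOre B) {W Y X : E} {ν : W ⟶ X} {l : Y ⟶ X}
    {x : InfPath F X} (hν : InPathOf ν x) (hl : InPathOf l x) :
    ∃ (P : E) (γ : P ⟶ W) (δ : P ⟶ Y), γ ≫ ν = δ ≫ l ∧ InPathOf (γ ≫ ν) x := by
  obtain ⟨A, p, q, hpq⟩ := hB (F.map ν) (F.map l)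
  let o := Over.mk (p ≫ F.map ν)
  let f : x.fn.obj o ⟶ Over.mk ν := x.fn.map (Over.homMk p : o ⟶ Over.mk (F.map ν)) ≫ eqToHom hν
  let g : x.fn.obj o ⟶ Over.mk l := x.fn.map (Over.homMk q hpq.symm : o ⟶ Over.mk (F.map l)) ≫ eqToHom hl
  have hf : f.left ≫ ν = (x.fn.obj o).hom := Over.w f
  have hg : g.left ≫ l = (x.fn.obj o).hom := Over.w g
  refine ⟨_, f.left, g.left, hf.trans hg.symm, ?_⟩
  rw [hf]
  exact congrArg x.fn.obj (x.post_obj o)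

/-! ### The translation maps -/

lemma Translates.symm {F : E ⥤ B} {W U V : E} {μ : W ⟶ U} {ν : W ⟶ V}
    {z : InfPath F V} {z' : InfPath F U} (h : Translates F μ ν z z') : Translates F ν μ z' z := by
  obtain ⟨w, ⟨h1, h2⟩, h3, h4⟩ := h
  exact ⟨w, ⟨h3, h4⟩, h1, h2⟩

/-- The path `w = res_ν z` is determined by `z`, in the following relative form: whenever
`z(F ν ∘ a) = ν ∘ α` with `F α = a`, one has `w(a) = α`. -/
lemma IndRel.obj_eq {F : E ⥤ B} (hF : IsDCF F) {W V A' : E} {ν : W ⟶ V}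
    {w : InfPath F W} {z : InfPath F V} (h : IndRel F ν w z) {A : B} (a : A ⟶ F.obj W)
    (α : A' ⟶ W) (hα : Over.mk (F.map α) = Over.mk a)
    (hz : z.fn.obj (Over.mk (a ≫ F.map ν)) = Over.mk (α ≫ ν)) :
    w.fn.obj (Over.mk a) = Over.mk α :=
  mk_cancel hF (α := (w.fn.obj (Over.mk a)).hom) ν ((h a).symm.trans hz)
    ((w.post_obj (Over.mk a)).trans hα.symm)

/-- `ind_μ ∘ res_ν` maps `Z(ν ∘ γ)` into `Z(μ ∘ γ)`. -/
lemma Translates.inPathOf_comp {F : E ⥤ B} (hF : IsDCF F) {P W U V : E} {μ : W ⟶ U} {ν : W ⟶ V}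
    {γ : P ⟶ W} {z : InfPath F V} {z' : InfPath F U} (h : Translates F μ ν z z')
    (hz : InPathOf (γ ≫ ν) z) : InPathOf (γ ≫ μ) z' := by
  obtain ⟨w, ⟨_, h2⟩, _, h4⟩ := h
  have hw := h2.obj_eq hF (F.map γ) γ rfl (by rw [← F.map_comp]; exact hz)
  have h5 := h4 (F.map γ)
  rw [hw, ← F.map_comp] at h5
  exact h5

/-- The translates of `z` by `(μ, ν)` and by `(μ ∘ γ, ν ∘ γ)` agree. -/
lemma Translates.eq_of_comp {F : E ⥤ B} (hF : IsDCF F) (hB : RightOre B) {P W U V : E}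
    {μ : W ⟶ U} {ν : W ⟶ V} {γ : P ⟶ W} {z : InfPath F V} {z' z'' : InfPath F U}
    (h : Translates F μ ν z z') (h' : Translates F (γ ≫ μ) (γ ≫ ν) z z'') : z' = z'' := by
  obtain ⟨w, ⟨_, h2⟩, _, h4⟩ := h
  obtain ⟨w', ⟨_, h2'⟩, _, h4'⟩ := h'
  refine InfPath.ext_of_cofinal hF hB (γ ≫ μ) fun a => ?_
  have hp : Over.mk (F.map (w'.fn.obj (Over.mk a)).hom) = Over.mk a := w'.post_obj _
  have hp' : Over.mk (F.map ((w'.fn.obj (Over.mk a)).hom ≫ γ)) = Over.mk (a ≫ F.map γ) := by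
    rw [F.map_comp]
    exact congrArg (Over.map (F.map γ)).obj hp
  have hz : z.fn.obj (Over.mk ((a ≫ F.map γ) ≫ F.map ν)) =
      Over.mk (((w'.fn.obj (Over.mk a)).hom ≫ γ) ≫ ν) := by
    have := h2' a
    simpa only [F.map_comp, Category.assoc] using this
  have hw := h2.obj_eq hF (a ≫ F.map γ) _ hp' hz
  have h5 := h4 (a ≫ F.map γ)
  rw [hw] at h5
  have h6 := h4' a
  simp only [F.map_comp, Category.assoc, Over.mk_hom] at h5 h6 ⊢
  exact h5.trans h6.symm

lemma Translates.unique {F : E ⥤ B} (hF : IsDCF F) (hB : RightOre B) {W U V : E}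
    {μ : W ⟶ U} {ν : W ⟶ V} {z : InfPath F V} {z' z'' : InfPath F U}
    (h : Translates F μ ν z z') (h' : Translates F μ ν z z'') : z' = z'' :=
  h.eq_of_comp hF hB (γ := 𝟙 W) (by simpa using h')

/-! ### Basic sets of infinite paths -/

lemma mem_ZMor {F : E ⥤ B} {Y X : E} {μ : Y ⟶ X} {x : InfPath F X} :
    (⟨X, x⟩ : FInf F) ∈ ZMor F μ ↔ InPathOf μ x :=
  ⟨fun ⟨_, h⟩ => h, fun h => ⟨rfl, h⟩⟩

lemma translatesP_mk {F : E ⥤ B} {W U V : E} {μ : W ⟶ U} {ν : W ⟶ V}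
    {z : InfPath F V} {z' : InfPath F U} :
    TranslatesP F μ ν ⟨V, z⟩ ⟨U, z'⟩ ↔ Translates F μ ν z z' :=
  ⟨fun ⟨_, _, h⟩ => h, fun h => ⟨rfl, rfl, h⟩⟩

lemma exists_of_mem_ZMor {F : E ⥤ B} {Y X : E} {μ : Y ⟶ X} {p : FInf F} (h : p ∈ ZMor F μ) :
    ∃ x : InfPath F X, p = ⟨X, x⟩ ∧ InPathOf μ x := by
  obtain ⟨X', x⟩ := p
  obtain ⟨h1, h2⟩ := h
  obtain rfl : X' = X := h1
  exact ⟨x, rfl, h2⟩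

lemma exists_of_translatesP {F : E ⥤ B} {W U V : E} {μ : W ⟶ U} {ν : W ⟶ V}
    {z : InfPath F V} {q : FInf F} (h : TranslatesP F μ ν ⟨V, z⟩ q) :
    ∃ z' : InfPath F U, q = ⟨U, z'⟩ ∧ Translates F μ ν z z' := by
  obtain ⟨X', x⟩ := q
  obtain ⟨_, h1, h2⟩ := h
  obtain rfl : X' = U := h1
  exact ⟨x, rfl, h2⟩

lemma ZMor_comp_subset {F : E ⥤ B} (hF : IsDCF F) {P Y X : E} (γ : P ⟶ Y) (ν : Y ⟶ X) :
    ZMor F (γ ≫ ν) ⊆ ZMor F ν := by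
  intro p hp
  obtain ⟨x, rfl, hx⟩ := exists_of_mem_ZMor hp
  exact mem_ZMor.2 (hx.of_comp hF)

/-- The sets `Z(μ)` form a basis: around each of its points the intersection `Z(ν) ∩ Z(l)`
contains some `Z(ν ∘ γ)`. -/
lemma ZMor_refine {F : E ⥤ B} (hF : IsDCF F) (hB : RightOre B) {W X Y X' : E} {ν : W ⟶ X}
    {l : Y ⟶ X'} {p : FInf F} (hν : p ∈ ZMor F ν) (hl : p ∈ ZMor F l) :
    ∃ (P : E) (γ : P ⟶ W), p ∈ ZMor F (γ ≫ ν) ∧ ZMor F (γ ≫ ν) ⊆ ZMor F l := by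
  obtain ⟨x, rfl, hx⟩ := exists_of_mem_ZMor hν
  obtain rfl : X = X' := hl.1
  obtain ⟨P, γ, δ, h1, h2⟩ := hx.refine hB (mem_ZMor.1 hl)
  exact ⟨P, γ, mem_ZMor.2 h2, h1 ▸ ZMor_comp_subset hF δ l⟩

/-! ### Basic sets of the groupoid -/

lemma smap_injOn {F : E ⥤ B} {smap : GF F → FInf F}
    (hs : ∀ g : PreG F, smap (Quot.mk (GERel F) g) = ⟨g.V, g.x⟩)
    {W U V : E} (μ : W ⟶ U) (ν : W ⟶ V) : Set.InjOn smap (ZPair F μ ν) := by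
  rintro _ ⟨x, hx, rfl⟩ _ ⟨y, hy, rfl⟩ h
  rw [hs, hs] at h
  obtain rfl : x = y := eq_of_heq (Sigma.mk.inj_iff.1 h).2
  rfl

/-- Equality in `G_F` is an open condition: if `[μ,ν,x] = [μ',ν',x]`, then `[μ,ν,y] = [μ',ν',y]`
for all `y` in some neighbourhood `Z(l)` of `x`. It is proved for the equivalence relation
generated by `GERel`, the witness `l` of `GERel` at `x` being a witness at every `y ∈ Z(l)`. -/
lemma exists_nhd_of_eq {F : E ⥤ B} (hF : IsDCF F) (hB : RightOre B) {smap : GF F → FInf F}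
    (hs : ∀ g : PreG F, smap (Quot.mk (GERel F) g) = ⟨g.V, g.x⟩) {g g' : PreG F}
    (h : Quot.mk (GERel F) g = Quot.mk (GERel F) g') :
    ∃ (Y X : E) (l : Y ⟶ X), (⟨g.V, g.x⟩ : FInf F) ∈ ZMor F l ∧
      ∀ p ∈ ZMor F l, ∃ k ∈ ZPair F g.μ g.ν ∩ ZPair F g'.μ g'.ν, smap k = p := by
  replace h := Quot.eqvGen_exact h
  induction h with
  | rel g g' h =>
    obtain ⟨W, U, V, μ, ν, x, hx⟩ := g
    obtain ⟨W', U', V', μ', ν', x', hx'⟩ := g'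
    obtain ⟨⟨hV, -⟩, ⟨Y, l, h1, h2, h3⟩, h4⟩ := h
    obtain rfl : V = V' := hV
    refine ⟨Y, V, l, h1, fun p hp => ?_⟩
    obtain ⟨y, rfl, hy⟩ := exists_of_mem_ZMor hp
    have m := mem_ZMor.1 (h2 hp).1
    have m' := mem_ZMor.1 (h2 hp).2
    refine ⟨Quot.mk _ ⟨W, U, V, μ, ν, y, m⟩, ⟨⟨y, m, rfl⟩, ⟨y, m', Quot.sound ?_⟩⟩, hs _⟩
    exact ⟨⟨rfl, rfl⟩, ⟨Y, l, hp, h2, h3⟩, h4⟩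
  | refl g =>
    refine ⟨g.W, g.V, g.ν, mem_ZMor.2 g.mem, fun p hp => ?_⟩
    obtain ⟨y, rfl, hy⟩ := exists_of_mem_ZMor hp
    exact ⟨Quot.mk _ ⟨g.W, g.U, g.V, g.μ, g.ν, y, hy⟩, ⟨⟨y, hy, rfl⟩, ⟨y, hy, rfl⟩⟩, hs _⟩
  | symm g g' h ih =>
    obtain ⟨Y, X, l, h1, h2⟩ := ih
    have e := congrArg smap (Quot.eqvGen_sound h)
    rw [hs, hs] at e
    refine ⟨Y, X, l, e ▸ h1, fun p hp => ?_⟩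
    obtain ⟨k, hk, hkp⟩ := h2 p hp
    exact ⟨k, hk.symm, hkp⟩
  | trans g g' g'' h h' ih ih' =>
    obtain ⟨Y, X, l, h1, h2⟩ := ih
    obtain ⟨Y', X', l', h1', h2'⟩ := ih'
    have e := congrArg smap (Quot.eqvGen_sound h)
    rw [hs, hs] at e
    obtain ⟨P, γ, h3, h4⟩ := ZMor_refine hF hB h1 (e ▸ h1')
    refine ⟨_, _, γ ≫ l, h3, fun p hp => ?_⟩
    obtain ⟨k, hk, hkp⟩ := h2 p (ZMor_comp_subset hF γ l hp)
    obtain ⟨k', hk', hkp'⟩ := h2' p (h4 hp)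
    obtain rfl : k = k' := smap_injOn hs g'.μ g'.ν hk.2 hk'.1 (hkp.trans hkp'.symm)
    exact ⟨k, ⟨hk.1, hk'.2⟩, hkp⟩

/-- `[μ,ν,x] = [μ ∘ γ, ν ∘ γ, x]` for `x ∈ Z(ν ∘ γ)`. -/
lemma mk_comp_eq {F : E ⥤ B} (hF : IsDCF F) (hB : RightOre B) {rmap : GF F → FInf F}
    (hr : ∀ g : PreG F,
      TranslatesP F g.μ g.ν ⟨g.V, g.x⟩ (rmap (Quot.mk (GERel F) g)))
    {P W U V : E} (μ : W ⟶ U) (ν : W ⟶ V) (γ : P ⟶ W) (x : InfPath F V)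
    (m : InPathOf ν x) (m' : InPathOf (γ ≫ ν) x) :
    Quot.mk (GERel F) ⟨W, U, V, μ, ν, x, m⟩ =
      Quot.mk (GERel F) ⟨P, U, V, γ ≫ μ, γ ≫ ν, x, m'⟩ := by
  refine Quot.sound ⟨⟨rfl, rfl⟩, ⟨P, γ ≫ ν, mem_ZMor.2 m',
    fun p hp => ⟨ZMor_comp_subset hF γ ν hp, hp⟩, fun p hp q => ?_⟩,
    ⟨F.obj P, F.map γ, 𝟙 _, ⟨rfl, rfl, by simp⟩, ⟨rfl, rfl, by simp⟩⟩⟩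
  obtain ⟨y, rfl, hy⟩ := exists_of_mem_ZMor hp
  -- both translates of `y` exist, and they agree
  obtain ⟨z, -, hz⟩ := exists_of_translatesP (hr ⟨W, U, V, μ, ν, y, hy.of_comp hF⟩)
  obtain ⟨z', -, hz'⟩ := exists_of_translatesP (hr ⟨P, U, V, γ ≫ μ, γ ≫ ν, y, hy⟩)
  obtain rfl := hz.eq_of_comp hF hB hz'
  constructor
  · intro h
    obtain ⟨q', rfl, hq⟩ := exists_of_translatesP h
    obtain rfl := hq.unique hF hB hz
    exact translatesP_mk.2 hz'
  · intro h
    obtain ⟨q', rfl, hq⟩ := exists_of_translatesP h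
    obtain rfl := hq.unique hF hB hz'
    exact translatesP_mk.2 hz

lemma ZPair_comp_subset {F : E ⥤ B} (hF : IsDCF F) (hB : RightOre B) {rmap : GF F → FInf F}
    (hr : ∀ g : PreG F,
      TranslatesP F g.μ g.ν ⟨g.V, g.x⟩ (rmap (Quot.mk (GERel F) g)))
    {P W U V : E} (μ : W ⟶ U) (ν : W ⟶ V) (γ : P ⟶ W) :
    ZPair F (γ ≫ μ) (γ ≫ ν) ⊆ ZPair F μ ν := by
  rintro _ ⟨x, hx, rfl⟩
  exact ⟨x, hx.of_comp hF, (mk_comp_eq hF hB hr μ ν γ x _ hx).symm⟩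

lemma isTopologicalBasis_pairBasis {F : E ⥤ B} (hF : IsDCF F) (hB : RightOre B)
    {rmap smap : GF F → FInf F}
    (hs : ∀ g : PreG F, smap (Quot.mk (GERel F) g) = ⟨g.V, g.x⟩)
    (hr : ∀ g : PreG F,
      TranslatesP F g.μ g.ν ⟨g.V, g.x⟩ (rmap (Quot.mk (GERel F) g))) :
    @TopologicalSpace.IsTopologicalBasis (GF F) (gTopology F) (pairBasis F) := by
  let _ : TopologicalSpace (GF F) := gTopology F
  refine ⟨?_, ?_, rfl⟩
  · rintro _ ⟨W, U, V, μ, ν, rfl⟩ _ ⟨W', U', V', μ', ν', rfl⟩ g ⟨⟨x, m, rfl⟩, ⟨x', m', h⟩⟩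
    obtain ⟨Y, X, l, h1, h2⟩ := exists_nhd_of_eq hF hB hs h
    obtain ⟨P, γ, h3, h4⟩ := ZMor_refine hF hB (mem_ZMor.2 m) h1
    have m3 := mem_ZMor.1 h3
    refine ⟨_, ⟨P, U, V, γ ≫ μ, γ ≫ ν, rfl⟩, ⟨x, m3, mk_comp_eq hF hB hr μ ν γ x m m3⟩, ?_⟩
    intro k hk
    have hk1 := ZPair_comp_subset hF hB hr μ ν γ hk
    refine ⟨hk1, ?_⟩
    obtain ⟨y, hy, rfl⟩ := hk
    obtain ⟨k', hk', e⟩ := h2 _ (h4 (mem_ZMor.2 hy))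
    have : k' = _ := smap_injOn hs μ ν hk'.1 hk1
        (e.trans (hs ⟨P, U, V, γ ≫ μ, γ ≫ ν, y, hy⟩).symm)
    exact this ▸ hk'.2
  · refine Set.eq_univ_of_forall fun g => ?_
    induction g using Quot.ind with
    | mk g => exact ⟨_, ⟨_, _, _, g.μ, g.ν, rfl⟩, g.x, g.mem, rfl⟩

/-- A bijection `A → C` which is continuous and open with respect to given subbases is a
homeomorphism. -/
lemma exists_homeomorph {S T : Type*} (b : Set (Set S)) (c : Set (Set T)) (φ : S → T)
    {A : Set S} {C : Set T} (hφ : Set.BijOn φ A C) (hb : ∀ g ∈ A, ∀ t ∈ c, φ g ∈ t →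
      ∃ s ∈ b, g ∈ s ∧ ∀ g' ∈ s, φ g' ∈ t)
    (hc : ∀ g ∈ A, ∀ s ∈ b, g ∈ s →
      ∃ t ∈ c, φ g ∈ t ∧ ∀ y ∈ t, ∃ g' ∈ s ∩ A, φ g' = y) :
    letI : TopologicalSpace S := TopologicalSpace.generateFrom b
    letI : TopologicalSpace T := TopologicalSpace.generateFrom c
    ∃ e : A.Elem ≃ₜ C.Elem, ∀ p, (e p).1 = φ p.1 := by
  let _ : TopologicalSpace S := TopologicalSpace.generateFrom b
  let _ : TopologicalSpace T := TopologicalSpace.generateFrom c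
  let e : A ≃ C := Set.BijOn.equiv φ hφ
  have he : ∀ p, (e p).1 = φ p.1 := fun p => rfl
  refine ⟨⟨e, ?_, ?_⟩, he⟩
  · refine Continuous.subtype_mk (f := fun p : A => φ p.1) (continuous_generateFrom_iff.2 ?_) _
    intro t ht
    refine isOpen_iff_forall_mem_open.2 fun g hg => ?_
    obtain ⟨s, hs, hgs, hst⟩ := hb g.1 g.2 t ht hg
    exact ⟨Subtype.val ⁻¹' s, fun g' hg' => hst _ hg',
      (TopologicalSpace.isOpen_generateFrom_of_mem hs).preimage continuous_subtype_val, hgs⟩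
  · refine continuous_induced_rng.2 (continuous_generateFrom_iff.2 fun s hs => ?_)
    refine isOpen_iff_forall_mem_open.2 fun y hy => ?_
    obtain ⟨g, rfl⟩ := e.surjective y
    have hgs : g.1 ∈ s := by simpa using hy
    obtain ⟨t, ht, hgt, hts⟩ := hc g.1 g.2 s hs hgs
    refine ⟨Subtype.val ⁻¹' t, fun y' hy' => ?_,
      (TopologicalSpace.isOpen_generateFrom_of_mem ht).preimage continuous_subtype_val, hgt⟩
    obtain ⟨g', ⟨hg's, hg'A⟩, e'⟩ := hts y'.1 hy'
    have : y' = e ⟨g', hg'A⟩ := Subtype.ext e'.symm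
    subst this
    simpa using hg's

theorem statement_17 (F : E ⥤ B) (hF : IsKPF F) (hrf : RowFinite F)
    (rmap smap : GF F → FInf F)
    (hs : ∀ g : PreG F, smap (Quot.mk (GERel F) g) = ⟨g.V, g.x⟩)
    (hr : ∀ g : PreG F,
      TranslatesP F g.μ g.ν ⟨g.V, g.x⟩ (rmap (Quot.mk (GERel F) g))) :
    letI : TopologicalSpace (FInf F) := pathTopology F
    letI : TopologicalSpace (GF F) := gTopology F
    ∀ {W U V : E} (μ : W ⟶ U) (ν : W ⟶ V),
      (∃ e : (ZPair F μ ν).Elem ≃ₜ (ZMor F ν).Elem, ∀ p, (e p).1 = smap p.1) ∧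
      (∃ e : (ZPair F μ ν).Elem ≃ₜ (ZMor F μ).Elem, ∀ p, (e p).1 = rmap p.1) ∧
      IsOpen (ZPair F μ ν) ∧
      TopologicalSpace.IsTopologicalBasis (pairBasis F) := by
  obtain ⟨hF, -, hB, -⟩ := hF
  intro W U V μ ν
  -- the range of a class is computed by any of its representatives
  have hr' : ∀ {W U V : E} (μ : W ⟶ U) (ν : W ⟶ V) (x : InfPath F V) (m : InPathOf ν x)
      (y : InfPath F U), Translates F μ ν x y →
      rmap (Quot.mk _ ⟨W, U, V, μ, ν, x, m⟩) = ⟨U, y⟩ := by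
    intro W U V μ ν x m y h
    obtain ⟨z, e, hz⟩ := exists_of_translatesP (hr ⟨W, U, V, μ, ν, x, m⟩)
    rw [e, hz.unique hF hB h]
  refine ⟨exists_homeomorph (pairBasis F) (pathBasis F) smap ⟨?_, smap_injOn hs μ ν, ?_⟩ ?_ ?_,
    exists_homeomorph (pairBasis F) (pathBasis F) rmap ⟨?_, ?_, ?_⟩ ?_ ?_,
    TopologicalSpace.isOpen_generateFrom_of_mem ⟨_, _, _, μ, ν, rfl⟩,
    isTopologicalBasis_pairBasis hF hB hs hr⟩
  · rintro _ ⟨x, m, rfl⟩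
    rw [hs]
    exact mem_ZMor.2 m
  · intro p hp
    obtain ⟨x, rfl, m⟩ := exists_of_mem_ZMor hp
    exact ⟨_, ⟨x, m, rfl⟩, hs _⟩
  · rintro _ ⟨x, m, rfl⟩ _ ⟨Y, X, l, rfl⟩ hl
    rw [hs] at hl
    obtain ⟨P, γ, h1, h2⟩ := ZMor_refine hF hB (mem_ZMor.2 m) hl
    have m1 := mem_ZMor.1 h1
    refine ⟨_, ⟨_, _, _, γ ≫ μ, γ ≫ ν, rfl⟩, ⟨x, m1, mk_comp_eq hF hB hr μ ν γ x m m1⟩, ?_⟩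
    rintro _ ⟨y, hy, rfl⟩
    rw [hs]
    exact h2 (mem_ZMor.2 hy)
  · rintro _ ⟨x, m, rfl⟩ _ ⟨W', U', V', σ, τ, rfl⟩ ⟨x', m', h⟩
    obtain ⟨Y, X, l, h1, h2⟩ := exists_nhd_of_eq hF hB hs h
    refine ⟨_, ⟨Y, X, l, rfl⟩, by rw [hs]; exact h1, fun y hy => ?_⟩
    obtain ⟨k, hk, e⟩ := h2 y hy
    exact ⟨k, hk.symm, e⟩
  · rintro _ ⟨x, m, rfl⟩
    obtain ⟨z, e, hz⟩ := exists_of_translatesP (hr ⟨W, U, V, μ, ν, x, m⟩)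
    rw [e]
    obtain ⟨w, -, hz, -⟩ := hz
    exact mem_ZMor.2 hz
  · rintro _ ⟨x, m, rfl⟩ _ ⟨y, n, rfl⟩ h
    obtain ⟨z, e, hz⟩ := exists_of_translatesP (hr ⟨W, U, V, μ, ν, x, m⟩)
    obtain ⟨z', e', hz'⟩ := exists_of_translatesP (hr ⟨W, U, V, μ, ν, y, n⟩)
    rw [e, e'] at h
    obtain rfl : z = z' := eq_of_heq (Sigma.mk.inj_iff.1 h).2
    obtain rfl := hz.symm.unique hF hB hz'.symm
    rfl
  · intro p hp
    obtain ⟨y, rfl, n⟩ := exists_of_mem_ZMor hp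
    -- the preimage of `y` is its translate in the opposite direction
    obtain ⟨x, -, hx⟩ := exists_of_translatesP (hr ⟨W, V, U, ν, μ, y, n⟩)
    have m : InPathOf ν x := by
      obtain ⟨_, -, h, -⟩ := hx
      exact h
    exact ⟨_, ⟨x, m, rfl⟩, hr' μ ν x m y hx.symm⟩
  · rintro _ ⟨x, m, rfl⟩ _ ⟨Y, X, l, rfl⟩ hl
    obtain ⟨y, e, hy⟩ := exists_of_translatesP (hr ⟨W, U, V, μ, ν, x, m⟩)
    rw [e] at hl
    have n : InPathOf μ y := by
      obtain ⟨_, -, h, -⟩ := hy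
      exact h
    -- shrink `Z(μ)` around the range `y`, and carry the result back to the source `x`
    obtain ⟨P, γ, h1, h2⟩ := ZMor_refine hF hB (mem_ZMor.2 n) hl
    have m1 : InPathOf (γ ≫ ν) x := hy.symm.inPathOf_comp hF (mem_ZMor.1 h1)
    refine ⟨_, ⟨_, _, _, γ ≫ μ, γ ≫ ν, rfl⟩, ⟨x, m1, mk_comp_eq hF hB hr μ ν γ x m m1⟩, ?_⟩
    rintro _ ⟨x', m', rfl⟩
    obtain ⟨y', e', hy'⟩ := exists_of_translatesP (hr ⟨P, U, V, γ ≫ μ, γ ≫ ν, x', m'⟩)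
    rw [e']
    obtain ⟨_, -, h, -⟩ := hy'
    exact h2 (mem_ZMor.2 h)
  · rintro _ ⟨x, m, rfl⟩ _ ⟨W', U', V', σ, τ, rfl⟩ ⟨x', m', h⟩
    obtain ⟨Y, X, l, h1, h2⟩ := exists_nhd_of_eq hF hB hs h
    obtain ⟨P, γ, h3, h4⟩ := ZMor_refine hF hB (mem_ZMor.2 m) h1
    obtain ⟨y, e, hy⟩ := exists_of_translatesP (hr ⟨W, U, V, μ, ν, x, m⟩)
    -- translation identifies the neighbourhood `Z(γ ≫ ν)` of `x` with `Z(γ ≫ μ)`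
    refine ⟨_, ⟨_, _, γ ≫ μ, rfl⟩, ?_, fun p hp => ?_⟩
    · rw [e]
      exact mem_ZMor.2 (hy.inPathOf_comp hF (mem_ZMor.1 h3))
    · obtain ⟨y', rfl, n⟩ := exists_of_mem_ZMor hp
      obtain ⟨z, -, hz⟩ := exists_of_translatesP (hr ⟨W, V, U, ν, μ, y', n.of_comp hF⟩)
      have hzν : InPathOf (γ ≫ ν) z := hz.inPathOf_comp hF n
      obtain ⟨k, hk, ek⟩ := h2 _ (h4 (mem_ZMor.2 hzν))
      refine ⟨k, hk.symm, ?_⟩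
      obtain ⟨z', hz', rfl⟩ := hk.1
      rw [hs] at ek
      obtain rfl : z' = z := eq_of_heq (Sigma.mk.inj_iff.1 ek).2
      exact hr' μ ν z' hz' y' hz.symm

end DCFpaper
end

section
/- Let F : E → B be a row-finite Kumjian-Pask fibration such that for every object B of B the slice category B/B has countably many objects and morphisms. Then G_F, with the topology generated by the sets Z(μ,ν), is a totally disconnected, locally compact, Hausdorff topological groupoid (composition is continuous and inversion is a homeomorphism). -/
/-! An infinite path is determined by the set of morphisms it passes through, and by unique
factorization lifting such a set is anything closed under prefixes and containing exactly one lift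
of each morphism of the slice of `B` (`path_ext`, `path_mk`). In these terms `q = ind_μ (res_ν p)`
says that `p` passes through `γ ≫ ν` exactly when `q` passes through `γ ≫ μ` (`transP_iff`); such a
`q` exists and is unique because `B` is strongly right Ore.

Two triples `(μ, ν, p)` and `(μ', ν', p)` define the same element of `G_F` if and only if
`γ ≫ μ = γ' ≫ μ'` and `γ ≫ ν = γ' ≫ ν'` for some `γ`, `γ'` with `p ∈ Z(γ ≫ ν)` (`ger_iff`,
`quot_eq_iff`): the square in `B` from the definition lifts along `p`. Consequently the sets
`Z(γ ≫ μ, γ ≫ ν)` with `p ∈ Z(γ ≫ ν)` form a neighbourhood basis of `[μ, ν, p]` (`exists_basic`).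

* Hausdorff (`t2`): different paths are separated by a morphism on one and not on the other. For
  different germs at the same path, lift the square in `B`, if there is one; a common refinement of
  the lifts at any nearby path would force the lifts to coincide, as `Z` of every morphism is
  non-empty.
* Compactness of `Z(μ, ν)` (`isCompact_ZPair`): by row-finiteness an ultrafilter on the paths to an
  object selects exactly one lift of each morphism of `B`, hence a path, which is its limit.
  Local compactness follows, and so does total disconnectedness, since in a Hausdorff space compact
  open sets are clopen.
* Composition and inversion are given on basic sets by `Z(μ, ν) · Z(ν, τ) ⊆ Z(μ, τ)` and
  `Z(μ, ν)⁻¹ ⊆ Z(ν, μ)`, so they are continuous, and inversion is an involution. -/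

open CategoryTheory

universe v u v' u' v'' u''

namespace DCFpaper

variable {E : Type u} [Category.{v} E] {B : Type u'} [Category.{v'} B]

/-! ### Infinite paths as sets of morphisms -/

section Paths

variable {F : E ⥤ B}

theorem over_mk_inj {C : Type u''} [Category.{v''} C] {A A' X : C} {f : A ⟶ X} {g : A' ⟶ X}
    (h : Over.mk f = Over.mk g) : ∃ e : A = A', f = eqToHom e ≫ g := by
  have e : A = A' := congrArg (fun o : Over X => o.left) h
  subst e
  refine ⟨rfl, ?_⟩
  injection h with _ _ h3
  simpa using h3

theorem over_mk_comp {C : Type u''} [Category.{v''} C] {A A' X X' : C} {f : A ⟶ X} {g : A' ⟶ X}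
    (h : Over.mk f = Over.mk g) (k : X ⟶ X') : Over.mk (f ≫ k) = Over.mk (g ≫ k) := by
  obtain ⟨rfl, rfl⟩ := over_mk_inj h
  simp

theorem over_mk_eqToHom {C : Type u''} [Category.{v''} C] {A A' X : C} (h : A = A')
    (t : A' ⟶ X) : Over.mk (eqToHom h ≫ t) = Over.mk t := by
  subst h; simp

/-- Uniqueness of lifted factorizations, with the two factorizations compared in `B`. -/
theorem dcf_unique (hF : IsDCF F) {Y X m m' : E} {α : Y ⟶ m} {ρ : m ⟶ X} {α' : Y ⟶ m'}
    {ρ' : m' ⟶ X} (hc : α' ≫ ρ' = α ≫ ρ) (h : F.obj m' = F.obj m)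
    (h1 : F.map α' = F.map α ≫ eqToHom h.symm) (h2 : F.map ρ' = eqToHom h ≫ F.map ρ) :
    ∃ e : m' = m, α' = α ≫ eqToHom e.symm ∧ ρ' = eqToHom e ≫ ρ := by
  have hu := (hF (α ≫ ρ) (F.map α) (F.map ρ) (F.map_comp _ _)).2
    ⟨m', α', ρ', hc, h, h1, h2⟩ ⟨m, α, ρ, rfl, rfl, by simp, by simp⟩
  injection hu with e1 e2 e3
  subst e1
  exact ⟨rfl, by simpa using e2, by simpa using e3⟩

/-- Right cancellation: `α` is determined by its image in `B` together with `α ≫ μ`.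
Both hypotheses and the conclusion are equalities in slice categories, so that they absorb the
identification of sources. -/
theorem dcf_cancel (hF : IsDCF F) {Y Y' X Z : E} {α : Y ⟶ X} {α' : Y' ⟶ X} {μ : X ⟶ Z}
    (h1 : Over.mk (F.map α) = Over.mk (F.map α')) (h2 : Over.mk (α ≫ μ) = Over.mk (α' ≫ μ)) :
    Over.mk α = Over.mk α' := by
  obtain ⟨rfl, e⟩ := over_mk_inj h2
  obtain ⟨_, e'⟩ := over_mk_inj h1
  obtain ⟨_, h, _⟩ := dcf_unique hF (α := α') (α' := α) (ρ := μ) (ρ' := μ) (by simpa using e) rfl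
    (by simpa using e') (by simp)
  rw [h]; simp

/-- Unique factorization lifting makes the functors induced on slices faithful, so the action of an
infinite path on morphisms is forced by its action on objects. -/
theorem post_faithful (hF : IsDCF F) {X : E} {ξ ξ' : Over X} {f f' : ξ ⟶ ξ'}
    (h : (Over.post (X := X) F).map f = (Over.post F).map f') : f = f' := by
  have h0 : F.map f.left = F.map f'.left := congrArg (fun t => t.left) h
  obtain ⟨_, h1, _⟩ := dcf_unique hF (α := f'.left) (ρ := ξ'.hom) (α' := f.left) (ρ' := ξ'.hom)
    (by simp) rfl (by simpa using h0) (by simp)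
  ext
  simpa using h1

theorem sec_obj {X : E} (x : InfPath F X) (o : Over (F.obj X)) :
    Over.mk (F.map (x.fn.obj o).hom) = o :=
  Functor.congr_obj x.sec o

theorem sec_obj' {X : E} (x : InfPath F X) (o : Over (F.obj X)) :
    (Over.post F).obj (x.fn.obj o) = o :=
  Functor.congr_obj x.sec o

theorem sec_map {X : E} (x : InfPath F X) {o o' : Over (F.obj X)} (j : o ⟶ o') :
    (Over.post F).map (x.fn.map j) =
      eqToHom (sec_obj' x o) ≫ j ≫ eqToHom (sec_obj' x o').symm :=
  Functor.congr_hom x.sec j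

theorem path_lift {X : E} (x : InfPath F X) (o : Over (F.obj X)) :
    InPathOf (x.fn.obj o).hom x := by
  unfold InPathOf
  rw [sec_obj]; rfl

theorem path_unique {X Y Y' : E} {x : InfPath F X} {μ : Y ⟶ X} {μ' : Y' ⟶ X}
    (h : InPathOf μ x) (h' : InPathOf μ' x) (e : Over.mk (F.map μ) = Over.mk (F.map μ')) :
    Over.mk μ = Over.mk μ' := by
  unfold InPathOf at h h'
  rw [← h, ← h', e]

/-- An infinite path through `α ≫ μ` passes through `μ`: it sends the slice morphism given by `F α`
to a lift of the factorization of `F (α ≫ μ)`, and this lift is unique. -/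
theorem path_prefix (hF : IsDCF F) {X Y Z : E} {x : InfPath F X} {μ : Y ⟶ X} {α : Z ⟶ Y}
    (h : InPathOf (α ≫ μ) x) : InPathOf μ x := by
  unfold InPathOf at h ⊢
  have hj := sec_map x (Over.homMk (U := Over.mk (F.map (α ≫ μ))) (V := Over.mk (F.map μ))
    (F.map α) (by simp))
  set j : Over.mk (F.map (α ≫ μ)) ⟶ Over.mk (F.map μ) := Over.homMk (F.map α) (by simp) with hjd
  have key : ∀ (ζ : Over X) (hζ : ζ = Over.mk (α ≫ μ)) (ξ : Over X) (f : ζ ⟶ ξ)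
      (hp : (Over.post F).obj ζ = Over.mk (F.map (α ≫ μ)))
      (hq : (Over.post F).obj ξ = Over.mk (F.map μ)),
      (Over.post F).map f = eqToHom hp ≫ j ≫ eqToHom hq.symm → ξ = Over.mk μ := by
    rintro _ rfl ξ f hp hq hf
    obtain ⟨e, he⟩ := over_mk_inj hq
    have hl : F.map f.left = F.map α ≫ eqToHom e.symm := by
      have h5 : (eqToHom hp).left = 𝟙 (F.obj Z) := by rw [Over.eqToHom_left]; rfl
      have := congrArg (fun t => t.left) hf
      simp only [Over.comp_left, h5, Over.eqToHom_left] at this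
      refine this.trans ?_
      simp only [hjd, Over.homMk_left]
      exact Category.id_comp _
    obtain ⟨e1, _, e3⟩ := dcf_unique hF (α := α) (ρ := μ) (α' := f.left) (ρ' := ξ.hom)
      (by simp) e hl (by simpa using he)
    have : ξ = Over.mk ξ.hom := rfl
    rw [this, e3]
    exact over_mk_eqToHom _ _
  exact key _ h _ _ (sec_obj' x _) (sec_obj' x _) hj

/-- An infinite path is determined by the morphisms it passes through. -/
theorem path_ext (hF : IsDCF F) {X : E} {x y : InfPath F X}
    (h : ∀ {Y : E} (μ : Y ⟶ X), InPathOf μ x → InPathOf μ y) : x = y := by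
  have ho : ∀ o, x.fn.obj o = y.fn.obj o := by
    intro o
    have := h _ (path_lift x o)
    unfold InPathOf at this
    rw [sec_obj] at this
    exact this.symm
  have : x.fn = y.fn := by
    refine CategoryTheory.Functor.ext ho ?_
    intro o o' j
    apply post_faithful hF
    simp only [Functor.map_comp, eqToHom_map, sec_map]
    simp
  cases x; cases y; cases this; rfl

/-- A path through `μ` also passes through some `α ≫ μ` with `α` over a prescribed morphism `a`
of `B`: factor its value at `a ≫ F μ` and compare the second factor with `μ`. -/
theorem path_extend (hF : IsDCF F) {X Y : E} {x : InfPath F X} {μ : Y ⟶ X}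
    (h : InPathOf μ x) {M : B} (a : M ⟶ F.obj Y) :
    ∃ (Y' : E) (α : Y' ⟶ Y), Over.mk (F.map α) = Over.mk a ∧ InPathOf (α ≫ μ) x := by
  have h1 := path_lift x (Over.mk (a ≫ F.map μ))
  have h2 := sec_obj x (Over.mk (a ≫ F.map μ))
  generalize x.fn.obj (Over.mk (a ≫ F.map μ)) = ξ at h1 h2
  obtain ⟨Y', _, k⟩ := ξ
  change Y' ⟶ X at k
  change InPathOf k x at h1
  change Over.mk (F.map k) = _ at h2
  obtain ⟨rfl, e⟩ := over_mk_inj h2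
  obtain ⟨⟨L⟩, -⟩ := hF k a (F.map μ) (by simpa using e)
  have h3 : InPathOf L.rho x := by
    apply path_prefix hF (α := L.lam); rwa [L.comp_eq]
  have h4 : Over.mk L.rho = Over.mk μ := by
    apply path_unique h3 h
    obtain ⟨mid, lam, rho, c, oe, ml, mr⟩ := L
    dsimp at *
    rw [mr]
    exact over_mk_eqToHom _ _
  obtain ⟨mid, lam, rho, c, oe, ml, mr⟩ := L
  dsimp at h4 c
  obtain ⟨rfl, rfl⟩ := over_mk_inj h4
  refine ⟨_, lam, ?_, ?_⟩
  · dsimp at ml; rw [ml]; simp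
  · simpa [← c] using h1

theorem path_id (hF : IsDCF F) {X : E} (x : InfPath F X) : InPathOf (𝟙 X) x := by
  have h1 := path_lift x (Over.mk (𝟙 (F.obj X)))
  have h2 := sec_obj x (Over.mk (𝟙 (F.obj X)))
  generalize x.fn.obj (Over.mk (𝟙 (F.obj X))) = ξ at h1 h2
  obtain ⟨Y', _, k⟩ := ξ
  change Y' ⟶ X at k
  change InPathOf k x at h1
  change Over.mk (F.map k) = _ at h2
  exact path_prefix hF (α := k) (by simpa using h1)

/-- By the right Ore condition, any two morphisms on an infinite path have a common refinement
on it. -/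
theorem path_directed (hF : IsDCF F) (hB : RightOre B) {X Y Y' : E} {x : InfPath F X}
    {μ : Y ⟶ X} {μ' : Y' ⟶ X} (h : InPathOf μ x) (h' : InPathOf μ' x) :
    ∃ (P : E) (α : P ⟶ Y) (α' : P ⟶ Y'), α ≫ μ = α' ≫ μ' ∧ InPathOf (α ≫ μ) x := by
  obtain ⟨P, p, q, hpq⟩ := hB (F.map μ) (F.map μ')
  obtain ⟨Z, α, e, hα⟩ := path_extend hF h p
  obtain ⟨Z', α', e', hα'⟩ := path_extend hF h' q
  have : Over.mk (α ≫ μ) = Over.mk (α' ≫ μ') := by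
    apply path_unique hα hα'
    rw [F.map_comp, F.map_comp, over_mk_comp e, over_mk_comp e', hpq]
  obtain ⟨rfl, e⟩ := over_mk_inj this
  exact ⟨_, α, α', by simpa using e, hα⟩

/-- An infinite path to `X` may be prescribed through the set `S` of morphisms it passes through:
`S` must be closed under prefixes and contain exactly one lift of each morphism into `F X`. -/
theorem path_mk (hF : IsDCF F) {X : E} (S : ∀ {Y : E}, (Y ⟶ X) → Prop)
    (hpre : ∀ {Y Z : E} (α : Z ⟶ Y) (μ : Y ⟶ X), S (α ≫ μ) → S μ)
    (hex : ∀ o : Over (F.obj X), ∃ (Y : E) (μ : Y ⟶ X), Over.mk (F.map μ) = o ∧ S μ)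
    (hun : ∀ {Y Y' : E} (μ : Y ⟶ X) (μ' : Y' ⟶ X), S μ → S μ' →
      Over.mk (F.map μ) = Over.mk (F.map μ') → Over.mk μ = Over.mk μ') :
    ∃ x : InfPath F X, ∀ {Y : E} (μ : Y ⟶ X), InPathOf μ x ↔ S μ := by
  have hex' : ∀ o : Over (F.obj X), ∃ c : Over X, (Over.post F).obj c = o ∧ S c.hom := by
    intro o
    obtain ⟨Y, μ, h, hS⟩ := hex o
    exact ⟨Over.mk μ, h, hS⟩
  choose c hc hS using hex'
  have hm : ∀ (o o' : Over (F.obj X)) (j : o ⟶ o'), ∃ f : c o ⟶ c o',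
      (Over.post F).map f = eqToHom (hc o) ≫ j ≫ eqToHom (hc o').symm := by
    intro o o' j
    have hk : ∀ (ζ : Over X) (A : E) (k : A ⟶ X) (hz : (Over.post F).obj ζ = o)
        (hx : (Over.post F).obj (Over.mk k) = o'), S ζ.hom → S k → ∃ f : ζ ⟶ Over.mk k,
          (Over.post F).map f = eqToHom hz ≫ j ≫ eqToHom hx.symm := by
      rintro ζ A k rfl rfl h1 h2
      -- lift the factorization that `j` encodes; prefix closure and uniqueness identify its second
      -- factor with `k`
      obtain ⟨⟨L⟩, -⟩ := hF ζ.hom j.left (F.map k) (Over.w j).symm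
      obtain ⟨mid, lam, rho, ce, oe, ml, mr⟩ := L
      have h4 : Over.mk rho = Over.mk k := by
        apply hun _ _ (hpre lam rho (by rwa [ce])) h2
        rw [mr]
        exact over_mk_eqToHom (A' := F.obj A) _ _
      obtain ⟨rfl, rfl⟩ := over_mk_inj h4
      refine ⟨Over.homMk lam (by simpa using ce), ?_⟩
      ext
      simp only [eqToHom_refl, Category.id_comp, Category.comp_id]
      exact ml.trans (Category.comp_id _)
    exact hk _ _ (c o').hom (hc o) (hc o') (hS o) (hS o')
  choose m hm using hm
  let G : Over (F.obj X) ⥤ Over X :=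
    { obj := c
      map := fun {o o'} => m o o'
      map_id := fun o => by
        apply post_faithful hF
        rw [hm, CategoryTheory.Functor.map_id]; simp
      map_comp := fun f g => by
        apply post_faithful hF
        rw [Functor.map_comp, hm, hm, hm]; simp }
  refine ⟨⟨G, CategoryTheory.Functor.ext hc (fun o o' j => hm o o' j)⟩, ?_⟩
  intro Y μ
  have hh : ∀ o, (c o) = Over.mk (c o).hom := fun o => rfl
  constructor
  · intro h
    change c _ = _ at h
    have := hS (Over.mk (F.map μ))
    rw [h] at this
    exact this
  · intro h
    change c _ = _
    rw [hh]
    apply hun _ _ (hS _) h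
    exact hc _

end Paths

/-! ### Restriction, induction and translation of infinite paths -/

section Translation

variable {F : E ⥤ B}

theorem indRel_iff {X Y : E} {μ : Y ⟶ X} {w : InfPath F Y} {x : InfPath F X} :
    IndRel F μ w x ↔ ∀ {Z : E} (α : Z ⟶ Y), InPathOf α w → InPathOf (α ≫ μ) x := by
  constructor
  · intro h Z α hα
    have := h (F.map α)
    unfold InPathOf at *
    rw [hα] at this
    rw [F.map_comp, this]; rfl
  · intro h A a
    have h1 := h _ (path_lift w (Over.mk a))
    have h2 := over_mk_comp (sec_obj w (Over.mk a)) (F.map μ)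
    unfold InPathOf at h1
    rw [F.map_comp, h2] at h1
    exact h1

/-- `x = ind_μ w` means that `w` passes through `α` exactly when `x` passes through `α ≫ μ`. -/
theorem indRel_iff' (hF : IsDCF F) {X Y : E} {μ : Y ⟶ X} {w : InfPath F Y} {x : InfPath F X} :
    IndRel F μ w x ↔ ∀ {Z : E} (α : Z ⟶ Y), InPathOf α w ↔ InPathOf (α ≫ μ) x := by
  rw [indRel_iff]
  refine ⟨fun h Z α => ⟨h α, fun hα => ?_⟩, fun h Z α => (h α).1⟩
  have h1 := path_lift w (Over.mk (F.map α))
  have h2 := sec_obj w (Over.mk (F.map α))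
  have h3 := h _ h1
  have h4 : Over.mk _ = Over.mk _ := path_unique h3 hα (by
    rw [F.map_comp, F.map_comp]; exact over_mk_comp h2 _)
  exact dcf_cancel hF h2 h4

/-- Existence of `res_ν z`. -/
theorem exists_res (hF : IsDCF F) {X Y : E} {ν : Y ⟶ X} {z : InfPath F X} (hz : InPathOf ν z) :
    ∃ w : InfPath F Y, ∀ {Z : E} (α : Z ⟶ Y), InPathOf α w ↔ InPathOf (α ≫ ν) z := by
  apply path_mk hF (fun α => InPathOf (α ≫ ν) z)
  · intro Z W α μ h
    rw [Category.assoc] at h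
    exact path_prefix hF h
  · intro o
    obtain ⟨Z, α, h1, h2⟩ := path_extend hF hz o.hom
    exact ⟨Z, α, h1, h2⟩
  · intro Z Z' α α' h h' e
    refine dcf_cancel hF e (path_unique h h' ?_)
    rw [F.map_comp, F.map_comp]; exact over_mk_comp e _

/-- Strong right Ore comparison of prefixes: if `β` and `β'` have the same image in `B` and both
are prefixes of morphisms `α ≫ μ`, `α' ≫ μ` with `α`, `α'` on one infinite path `w`, they agree. -/
theorem ind_unique (hF : IsDCF F) (hB : StronglyRightOre B) {X Y Z Z' P P' : E} {μ : Y ⟶ X}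
    {w : InfPath F Y} {β : Z ⟶ X} {β' : Z' ⟶ X} {γ : P ⟶ Z} {γ' : P' ⟶ Z'} {α : P ⟶ Y}
    {α' : P' ⟶ Y} (hc : γ ≫ β = α ≫ μ) (hc' : γ' ≫ β' = α' ≫ μ) (hα : InPathOf α w)
    (hα' : InPathOf α' w) (e : Over.mk (F.map β) = Over.mk (F.map β')) :
    Over.mk β = Over.mk β' := by
  obtain ⟨e0, e1⟩ := over_mk_inj e
  obtain ⟨W, c, d, h1, h2⟩ := hB.2 (F.map β) (F.map μ) (F.map γ) (F.map α)
    (F.map γ' ≫ eqToHom e0.symm) (F.map α') (by rw [← F.map_comp, ← F.map_comp, hc])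
    (by
      rw [e1]
      simp only [Category.assoc, eqToHom_trans_assoc, eqToHom_refl, Category.id_comp]
      rw [← F.map_comp, ← F.map_comp, hc'])
  obtain ⟨V, δ, hδ, hδw⟩ := path_extend hF hα c
  obtain ⟨V', δ', hδ', hδw'⟩ := path_extend hF hα' d
  have h3 : Over.mk (δ ≫ α) = Over.mk (δ' ≫ α') := by
    apply path_unique hδw hδw'
    rw [F.map_comp, F.map_comp, over_mk_comp hδ, over_mk_comp hδ', h2]
  obtain ⟨rfl, h4⟩ := over_mk_inj h3
  obtain ⟨rfl, k1⟩ := over_mk_inj hδ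
  obtain ⟨k0, k2⟩ := over_mk_inj hδ'
  simp only [eqToHom_refl, Category.id_comp] at k1 k2 h4
  obtain ⟨f0, f1, f2⟩ := dcf_unique hF (α := δ ≫ γ) (ρ := β) (α' := δ' ≫ γ') (ρ' := β')
    (by rw [Category.assoc, Category.assoc, hc, hc', ← Category.assoc, ← Category.assoc, h4])
    e0.symm (by
      rw [F.map_comp, F.map_comp, k1, k2, h1]; simp) (by rw [e1]; simp)
  rw [f2]
  exact (over_mk_eqToHom _ _).symm

/-- Existence of `ind_μ w`: it passes through `β` when some `γ ≫ β` has the form `α ≫ μ` with `α` on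
`w`. The right Ore condition gives existence of lifts, and the strong one their uniqueness. -/
theorem exists_ind (hF : IsDCF F) (hB : StronglyRightOre B) {X Y : E} (μ : Y ⟶ X)
    (w : InfPath F Y) : ∃ x : InfPath F X, IndRel F μ w x := by
  suffices h : ∃ x : InfPath F X, ∀ {Z : E} (β : Z ⟶ X), InPathOf β x ↔
      ∃ (P : E) (γ : P ⟶ Z) (α : P ⟶ Y), γ ≫ β = α ≫ μ ∧ InPathOf α w by
    obtain ⟨x, hx⟩ := h
    exact ⟨x, indRel_iff.2 fun {Z} α hα => (hx _).2 ⟨Z, 𝟙 Z, α, by simp, hα⟩⟩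
  refine path_mk hF (X := X) (fun {Z} β => ∃ (P : E) (γ : P ⟶ Z) (α : P ⟶ Y),
      γ ≫ β = α ≫ μ ∧ InPathOf α w) ?_ ?_ ?_
  · rintro Z W δ β ⟨P, γ, α, h, hα⟩
    exact ⟨P, γ ≫ δ, α, by rw [Category.assoc, h], hα⟩
  · intro o
    obtain ⟨P, p, q, hpq⟩ := hB.1 o.hom (F.map μ)
    obtain ⟨Z, α, e, hα⟩ := path_extend hF (path_id hF w) q
    rw [Category.comp_id] at hα
    obtain ⟨rfl, e'⟩ := over_mk_inj e
    simp only [eqToHom_refl, Category.id_comp] at e'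
    obtain ⟨⟨L⟩, -⟩ := hF (α ≫ μ) p o.hom (by rw [F.map_comp, e', hpq])
    refine ⟨L.mid, L.rho, ?_, Z, L.lam, α, L.comp_eq, hα⟩
    rw [L.map_rho, over_mk_eqToHom]; rfl
  · rintro Z Z' β β' ⟨P, γ, α, h, hα⟩ ⟨P', γ', α', h', hα'⟩ e
    exact ind_unique hF hB h h' hα hα' e

/-! ### Membership in `Z(μ)` -/

theorem mem_iff {p : FInf F} {Y : E} {μ : Y ⟶ p.1} : p ∈ ZMor F μ ↔ InPathOf μ p.2 :=
  ⟨fun ⟨_, h⟩ => h, fun h => ⟨rfl, h⟩⟩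

theorem mem_fst {X Y : E} {μ : Y ⟶ X} {p : FInf F} (h : p ∈ ZMor F μ) : p.1 = X := h.1

theorem mem_prefix (hF : IsDCF F) {X Y Z : E} {p : FInf F} {μ : Y ⟶ X} {α : Z ⟶ Y}
    (h : p ∈ ZMor F (α ≫ μ)) : p ∈ ZMor F μ := by
  obtain rfl : p.1 = X := h.1
  rw [mem_iff] at *
  exact path_prefix hF h

theorem mem_id (hF : IsDCF F) {X : E} {p : FInf F} : p ∈ ZMor F (𝟙 X) ↔ p.1 = X := by
  refine ⟨fun h => h.1, ?_⟩
  rintro rfl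
  exact mem_iff.2 (path_id hF p.2)

theorem mem_unique {X Y Y' : E} {p : FInf F} {μ : Y ⟶ X} {μ' : Y' ⟶ X}
    (h : p ∈ ZMor F μ) (h' : p ∈ ZMor F μ') (e : Over.mk (F.map μ) = Over.mk (F.map μ')) :
    Over.mk μ = Over.mk μ' := by
  obtain rfl : p.1 = X := h.1
  rw [mem_iff] at *
  exact path_unique h h' e

theorem mem_extend (hF : IsDCF F) {X Y : E} {p : FInf F} {μ : Y ⟶ X}
    (h : p ∈ ZMor F μ) {M : B} (a : M ⟶ F.obj Y) :
    ∃ (Y' : E) (α : Y' ⟶ Y), Over.mk (F.map α) = Over.mk a ∧ p ∈ ZMor F (α ≫ μ) := by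
  obtain rfl : p.1 = X := h.1
  simp only [mem_iff] at *
  exact path_extend hF h a

theorem mem_directed (hF : IsDCF F) (hB : RightOre B) {X Y Y' : E} {p : FInf F}
    {μ : Y ⟶ X} {μ' : Y' ⟶ X} (h : p ∈ ZMor F μ) (h' : p ∈ ZMor F μ') :
    ∃ (P : E) (α : P ⟶ Y) (α' : P ⟶ Y'), α ≫ μ = α' ≫ μ' ∧ p ∈ ZMor F (α ≫ μ) := by
  obtain rfl : p.1 = X := h.1
  simp only [mem_iff] at *
  exact path_directed hF hB h h'

theorem finf_ext (hF : IsDCF F) {p q : FInf F} (h0 : p.1 = q.1)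
    (h : ∀ {Y : E} (μ : Y ⟶ p.1), p ∈ ZMor F μ → q ∈ ZMor F μ) : p = q := by
  have key : ∀ q : FInf F, ∀ h0 : p.1 = q.1, (∀ {Y : E} (μ : Y ⟶ p.1), p ∈ ZMor F μ →
      q ∈ ZMor F μ) → p = q := by
    rintro ⟨X', y⟩ h0 h
    change p.1 = X' at h0
    subst h0
    have : p.2 = y := path_ext hF fun μ hμ => by
      obtain ⟨_, h2⟩ := h μ (mem_iff.2 hμ)
      exact h2
    rw [← this]; rfl
  exact key q h0 h

/-- Local splitting provides an infinite path to the source of `μ`, which `ind_μ` carries into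
`Z(μ)`. -/
theorem Z_nonempty (hF : IsKPF F) {X Y : E} (μ : Y ⟶ X) : ∃ p : FInf F, p ∈ ZMor F μ := by
  obtain ⟨f, hf⟩ := hF.2.1 Y
  obtain ⟨x, hx⟩ := exists_ind hF.1 hF.2.2 μ ⟨f, hf⟩
  refine ⟨⟨X, x⟩, rfl, ?_⟩
  simpa using indRel_iff.1 hx (𝟙 Y) (path_id hF.1 _)

/-- The relation `q = ind_μ (res_ν p)` in terms of the morphisms on `p` and on `q`. -/
theorem transP_iff (hF : IsDCF F) {W U V : E} {μ : W ⟶ U} {ν : W ⟶ V} {p q : FInf F} :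
    TranslatesP F μ ν p q ↔ p ∈ ZMor F ν ∧ q.1 = U ∧
      ∀ {Z : E} (α : Z ⟶ W), p ∈ ZMor F (α ≫ ν) ↔ q ∈ ZMor F (α ≫ μ) := by
  constructor
  · rintro ⟨h1, h2, w, ⟨h3, h4⟩, h5, h6⟩
    cases h1; cases h2
    refine ⟨mem_iff.2 h3, rfl, fun α => ?_⟩
    rw [mem_iff, mem_iff, ← (indRel_iff' hF).1 h4, ← (indRel_iff' hF).1 h6]
  · rintro ⟨⟨h1, h2⟩, h3, h4⟩
    cases h1; cases h3
    obtain ⟨w, hw⟩ := exists_res hF h2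
    simp only [mem_iff] at h4
    have h5 : InPathOf μ q.2 := by
      have := (h4 (𝟙 _)).1 (by simpa using h2)
      simpa using this
    exact ⟨rfl, rfl, w, ⟨h2, (indRel_iff' hF).2 hw⟩, h5,
      (indRel_iff' hF).2 fun α => (hw α).trans (h4 α)⟩

theorem transP_exists (hF : IsKPF F) {W U V : E} (μ : W ⟶ U) {ν : W ⟶ V} {p : FInf F}
    (hp : p ∈ ZMor F ν) : ∃ q : FInf F, TranslatesP F μ ν p q := by
  obtain ⟨h1, h2⟩ := hp
  cases h1
  obtain ⟨w, hw⟩ := exists_res hF.1 h2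
  obtain ⟨y, hy⟩ := exists_ind hF.1 hF.2.2 μ w
  refine ⟨⟨U, y⟩, rfl, rfl, w, ⟨h2, (indRel_iff' hF.1).2 hw⟩, ?_, hy⟩
  simpa using indRel_iff.1 hy (𝟙 _) (path_id hF.1 w)

theorem transP_unique (hF : IsDCF F) (hB : StronglyRightOre B) {W U V : E} {μ : W ⟶ U}
    {ν : W ⟶ V} {p q q' : FInf F}
    (h : TranslatesP F μ ν p q) (h' : TranslatesP F μ ν p q') : q = q' := by
  rw [transP_iff hF] at h h'
  obtain ⟨h1, h2, h3⟩ := h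
  obtain ⟨-, h2', h3'⟩ := h'
  have hq : q ∈ ZMor F μ := by
    have := (h3 (𝟙 _)).1 (by simpa using h1)
    simpa using this
  subst h2
  refine finf_ext hF h2'.symm fun {Y} β hβ => ?_
  obtain ⟨P, α, α', e, h4⟩ := mem_directed hF hB.1 hβ hq
  rw [e, ← h3, h3', ← e] at h4
  exact mem_prefix hF h4

theorem transP_symm (hF : IsDCF F) {W U V : E} {μ : W ⟶ U} {ν : W ⟶ V} {p q : FInf F}
    (h : TranslatesP F μ ν p q) : TranslatesP F ν μ q p := by
  rw [transP_iff hF] at h ⊢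
  obtain ⟨h1, h2, h3⟩ := h
  refine ⟨?_, h1.1, fun α => (h3 α).symm⟩
  have := (h3 (𝟙 _)).1 (by simpa using h1)
  simpa using this

/-- Translation is insensitive to common refinement of the pair `(μ, ν)`. -/
theorem transP_refine (hF : IsDCF F) (hB : StronglyRightOre B) {P W U V : E} (γ : P ⟶ W)
    {μ : W ⟶ U} {ν : W ⟶ V} {p q : FInf F} (hp : p ∈ ZMor F (γ ≫ ν)) :
    TranslatesP F (γ ≫ μ) (γ ≫ ν) p q ↔ TranslatesP F μ ν p q := by
  have key : ∀ q, TranslatesP F μ ν p q → TranslatesP F (γ ≫ μ) (γ ≫ ν) p q := by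
    intro q h
    rw [transP_iff hF] at h ⊢
    exact ⟨hp, h.2.1, fun α => by simpa using h.2.2 (α ≫ γ)⟩
  refine ⟨fun h => ?_, key q⟩
  -- compare `q` with the path obtained by translating along `(μ, ν)`
  obtain ⟨h1, h2⟩ := mem_prefix hF hp
  cases h1
  obtain ⟨w, hw⟩ := exists_res hF h2
  obtain ⟨y, hy⟩ := exists_ind hF hB μ w
  have h3 : TranslatesP F μ ν p ⟨U, y⟩ := by
    refine ⟨rfl, rfl, w, ⟨h2, (indRel_iff' hF).2 hw⟩, ?_, hy⟩
    simpa using indRel_iff.1 hy (𝟙 _) (path_id hF w)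
  rwa [transP_unique hF hB h (key _ h3)]

end Translation

/-! ### Germs -/

section Germs

variable {F : E ⥤ B}

/-- The common refinement of `γ ≫ ν` and `γ' ≫ ν` along a path may be taken over the source of `ν`,
that is, before composing with `ν`. -/
theorem mem_directed_over (hF : IsDCF F) (hB : RightOre B) {X W Y Y' : E} {p : FInf F}
    {ν : W ⟶ X} {γ : Y ⟶ W} {γ' : Y' ⟶ W} (h : p ∈ ZMor F (γ ≫ ν))
    (h' : p ∈ ZMor F (γ' ≫ ν)) :
    ∃ (P : E) (α : P ⟶ Y) (α' : P ⟶ Y'), α ≫ γ = α' ≫ γ' ∧ p ∈ ZMor F (α ≫ γ ≫ ν) := by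
  obtain rfl : p.1 = X := h.1
  obtain ⟨w, hw⟩ := exists_res hF (mem_iff.1 (mem_prefix hF h))
  obtain ⟨P, α, α', e, h1⟩ := path_directed hF hB ((hw γ).2 (mem_iff.1 h))
    ((hw γ').2 (mem_iff.1 h'))
  refine ⟨P, α, α', e, mem_iff.2 ?_⟩
  simpa using (hw _).1 h1

/-- The triple `(μ, ν, p)` with its infinite path given as a point of `F^∞`. -/
def pm {W U V : E} (μ : W ⟶ U) (ν : W ⟶ V) (p : FInf F) (hp : p ∈ ZMor F ν) : PreG F :=
  ⟨W, U, V, μ, ν, hp.1 ▸ p.2, hp.2⟩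

/-- The class `[μ, ν, p]` in `G_F`. -/
def gm {W U V : E} (μ : W ⟶ U) (ν : W ⟶ V) (p : FInf F) (hp : p ∈ ZMor F ν) : GF F :=
  Quot.mk (GERel F) (pm μ ν p hp)

/-- The infinite path of a triple, as a point of `F^∞`. -/
def pt (g : PreG F) : FInf F := ⟨g.V, g.x⟩

theorem pt_mem (g : PreG F) : pt g ∈ ZMor F g.ν := ⟨rfl, g.mem⟩

theorem pm_pt (g : PreG F) : pm g.μ g.ν (pt g) (pt_mem g) = g := rfl

theorem pt_pm {W U V : E} (μ : W ⟶ U) (ν : W ⟶ V) (p : FInf F) (hp : p ∈ ZMor F ν) :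
    pt (pm μ ν p hp) = p := by
  obtain rfl : p.1 = V := hp.1
  rfl

/-- Two triples have the same germ if, after common refinement `γ`, `γ'` along the infinite path,
their pairs of morphisms coincide. -/
def Germ (g g' : PreG F) : Prop :=
  pt g = pt g' ∧ ∃ (P : E) (γ : P ⟶ g.W) (γ' : P ⟶ g'.W) (hU : g'.U = g.U) (hV : g'.V = g.V),
    γ ≫ g.μ = γ' ≫ g'.μ ≫ eqToHom hU ∧ γ ≫ g.ν = γ' ≫ g'.ν ≫ eqToHom hV ∧
      pt g ∈ ZMor F (γ ≫ g.ν)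

/-- The relation defining `G_F` is equality of germs. From left to right, the square `(a, b)` in `B` is
lifted along the path `p` and along its common translate `q`; from right to left, translation along
a pair does not change under refinement. -/
theorem ger_iff (hF : IsKPF F) {g g' : PreG F} : GERel F g g' ↔ Germ g g' := by
  obtain ⟨W, U, V, μ, ν, x, m⟩ := g
  obtain ⟨W', U', V', μ', ν', x', m'⟩ := g'
  constructor
  · rintro ⟨⟨hV, hx⟩, ⟨Λ, lam, hl, hsub, hT⟩, M, a, b, hab1, hab2⟩
    cases hV
    obtain rfl : x = x' := hx
    dsimp only at *
    set p : FInf F := ⟨V, x⟩ with hp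
    have hν : p ∈ ZMor F ν := (hsub hl).1
    have hν' : p ∈ ZMor F ν' := (hsub hl).2
    obtain ⟨q, hq⟩ := transP_exists hF μ hν
    have hq' := (hT p hl q).1 hq
    rw [transP_iff hF.1] at hq hq'
    obtain ⟨-, hU, hq⟩ := hq
    obtain ⟨-, hU', hq'⟩ := hq'
    subst hU
    subst hU'
    obtain ⟨_, _, hab1⟩ := hab1
    obtain ⟨_, _, hab2⟩ := hab2
    simp only [eqToHom_refl, Category.id_comp, Category.comp_id] at hab1 hab2
    obtain ⟨Y, α, e, hα⟩ := mem_extend hF.1 hν a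
    obtain ⟨Y', α', e', hα'⟩ := mem_extend hF.1 hν' b
    have h1 : Over.mk (α ≫ ν) = Over.mk (α' ≫ ν') := by
      apply mem_unique hα hα'
      rw [F.map_comp, F.map_comp, over_mk_comp e, over_mk_comp e', hab2]
    obtain ⟨rfl, h1⟩ := over_mk_inj h1
    have h2 : Over.mk (α ≫ μ) = Over.mk (α' ≫ μ') := by
      apply mem_unique ((hq α).1 hα) ((hq' α').1 hα')
      rw [F.map_comp, F.map_comp, over_mk_comp e, over_mk_comp e', hab1]
    obtain ⟨_, h2⟩ := over_mk_inj h2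
    exact ⟨rfl, Y, α, α', rfl, rfl, by simpa using h2, by simpa using h1, hα⟩
  · rintro ⟨hpt, P, γ, γ', hU, hV, h1, h2, h3⟩
    cases hU
    cases hV
    dsimp only at *
    obtain rfl : x = x' := eq_of_heq (Sigma.mk.inj hpt).2
    simp only [eqToHom_refl, Category.comp_id] at h1 h2
    refine ⟨⟨rfl, rfl⟩, ⟨P, γ ≫ ν, h3, ?_, ?_⟩, F.obj P, F.map γ, F.map γ', ?_, ?_⟩
    · intro q hq
      refine ⟨mem_prefix hF.1 hq, ?_⟩
      rw [h2] at hq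
      exact mem_prefix hF.1 hq
    · intro q hq r
      rw [← transP_refine hF.1 hF.2.2 γ hq, ← transP_refine hF.1 hF.2.2 γ' (h2 ▸ hq), h1, h2]
    · exact ⟨rfl, rfl, by simp only [eqToHom_refl, Category.id_comp, Category.comp_id, ← F.map_comp, h1]⟩
    · exact ⟨rfl, rfl, by simp only [eqToHom_refl, Category.id_comp, Category.comp_id, ← F.map_comp, h2]⟩

theorem germ_equivalence (hF : IsKPF F) : Equivalence (Germ (F := F)) := by
  refine ⟨fun g => ⟨rfl, g.W, 𝟙 _, 𝟙 _, rfl, rfl, by simp, by simp, ?_⟩, ?_, ?_⟩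
  · rw [Category.id_comp]; exact pt_mem g
  · intro g g'
    obtain ⟨W, U, V, μ, ν, x, m⟩ := g
    obtain ⟨W', U', V', μ', ν', x', m'⟩ := g'
    rintro ⟨hpt, P, γ, γ', hU, hV, h1, h2, h3⟩
    cases hU
    cases hV
    dsimp only at *
    simp only [eqToHom_refl, Category.comp_id] at h1 h2
    exact ⟨hpt.symm, P, γ', γ, rfl, rfl, by simp [h1], by simp [h2], by
      dsimp only; rw [← hpt, ← h2]; exact h3⟩
  · intro g g' g''
    obtain ⟨W, U, V, μ, ν, x, m⟩ := g
    obtain ⟨W', U', V', μ', ν', x', m'⟩ := g'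
    obtain ⟨W'', U'', V'', μ'', ν'', x'', m''⟩ := g''
    rintro ⟨hpt, P, γ, γ', hU, hV, h1, h2, h3⟩
    rintro ⟨hpt', P', δ, δ', hU', hV', h1', h2', h3'⟩
    cases hU
    cases hV
    cases hU'
    cases hV'
    dsimp only at *
    simp only [eqToHom_refl, Category.comp_id] at h1 h2 h1' h2'
    have h4 := h3
    rw [h2, hpt] at h4
    obtain ⟨Q, α, α', e, h5⟩ := mem_directed_over hF.1 hF.2.2.1 h4 h3'
    refine ⟨hpt.trans hpt', Q, α ≫ γ, α' ≫ δ', rfl, rfl, ?_, ?_, ?_⟩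
    · simp only [Category.assoc, eqToHom_refl, Category.comp_id]
      rw [← h1', h1, ← Category.assoc, e, Category.assoc]
    · simp only [Category.assoc, eqToHom_refl, Category.comp_id]
      rw [← h2', h2, ← Category.assoc, e, Category.assoc]
    · dsimp only
      rw [Category.assoc, h2, hpt]
      exact h5

/-- Since having the same germ is an equivalence relation, equality in the quotient is exactly the
defining relation. -/
theorem quot_eq_iff (hF : IsKPF F) {g g' : PreG F} :
    (Quot.mk (GERel F) g : GF F) = Quot.mk (GERel F) g' ↔ Germ g g' := by
  have he : GERel F = Germ := by
    funext g g'
    exact propext (ger_iff hF)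
  constructor
  · intro h
    have := Quot.eqvGen_exact h
    rw [he] at this
    exact (germ_equivalence hF).eqvGen_iff.1 this
  · intro h
    exact Quot.sound ((ger_iff hF).2 h)

theorem gm_eq_iff (hF : IsKPF F) {W W' U V : E} {μ : W ⟶ U} {ν : W ⟶ V} {μ' : W' ⟶ U}
    {ν' : W' ⟶ V} {p p' : FInf F} {hp : p ∈ ZMor F ν} {hp' : p' ∈ ZMor F ν'} :
    gm μ ν p hp = gm μ' ν' p' hp' ↔ p = p' ∧ ∃ (P : E) (γ : P ⟶ W) (γ' : P ⟶ W'),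
      γ ≫ μ = γ' ≫ μ' ∧ γ ≫ ν = γ' ≫ ν' ∧ p ∈ ZMor F (γ ≫ ν) := by
  refine (quot_eq_iff hF).trans ?_
  unfold Germ
  rw [pt_pm, pt_pm]
  constructor
  · rintro ⟨h, P, γ, γ', _, _, h1, h2, h3⟩
    change P ⟶ W at γ
    change P ⟶ W' at γ'
    have h1' : γ ≫ μ = γ' ≫ μ' ≫ 𝟙 _ := h1
    have h2' : γ ≫ ν = γ' ≫ ν' ≫ 𝟙 _ := h2
    exact ⟨h, P, γ, γ', by simpa using h1', by simpa using h2', h3⟩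
  · rintro ⟨h, P, γ, γ', h1, h2, h3⟩
    have h1' : γ ≫ μ = γ' ≫ μ' ≫ 𝟙 _ := by simpa using h1
    have h2' : γ ≫ ν = γ' ≫ ν' ≫ 𝟙 _ := by simpa using h2
    exact ⟨h, P, γ, γ', rfl, rfl, h1', h2', h3⟩

theorem gm_eq_ends (hF : IsKPF F) {W W' U V U' V' : E} {μ : W ⟶ U} {ν : W ⟶ V} {μ' : W' ⟶ U'}
    {ν' : W' ⟶ V'} {p p' : FInf F} {hp : p ∈ ZMor F ν} {hp' : p' ∈ ZMor F ν'}
    (h : gm μ ν p hp = gm μ' ν' p' hp') : U' = U ∧ V' = V := by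
  obtain ⟨_, _, _, _, hU, hV, _⟩ := (quot_eq_iff hF).1 h
  exact ⟨hU, hV⟩

theorem gm_refine (hF : IsKPF F) {P W U V : E} (γ : P ⟶ W) {μ : W ⟶ U} {ν : W ⟶ V}
    {p : FInf F} (hp : p ∈ ZMor F (γ ≫ ν)) :
    gm (γ ≫ μ) (γ ≫ ν) p hp = gm μ ν p (mem_prefix hF.1 hp) :=
  (gm_eq_iff hF).2 ⟨rfl, P, 𝟙 P, γ, by simp, by simp, by simpa using hp⟩

theorem gm_cases (g : GF F) : ∃ (W U V : E) (μ : W ⟶ U) (ν : W ⟶ V) (p : FInf F)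
    (hp : p ∈ ZMor F ν), g = gm μ ν p hp := by
  obtain ⟨g⟩ := g
  exact ⟨_, _, _, g.μ, g.ν, pt g, pt_mem g, rfl⟩

theorem mem_ZPair {W U V : E} {μ : W ⟶ U} {ν : W ⟶ V} {g : GF F} :
    g ∈ ZPair F μ ν ↔ ∃ (p : FInf F) (hp : p ∈ ZMor F ν), g = gm μ ν p hp := by
  constructor
  · rintro ⟨x, m, rfl⟩
    exact ⟨⟨V, x⟩, ⟨rfl, m⟩, rfl⟩
  · rintro ⟨p, hp, rfl⟩
    exact ⟨_, _, rfl⟩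

/-- The source of a germ, as a point of `F^∞`. -/
def src (hF : IsKPF F) : GF F → FInf F :=
  Quot.lift pt fun _ _ h => ((ger_iff hF).1 h).1

theorem src_gm (hF : IsKPF F) {W U V : E} (μ : W ⟶ U) (ν : W ⟶ V) (p : FInf F)
    (hp : p ∈ ZMor F ν) : src hF (gm μ ν p hp) = p := pt_pm μ ν p hp

/-- Translation along a pair at `p` depends only on the germ of the pair at `p`. -/
theorem transP_congr (hF : IsKPF F) {W W' U V U' V' : E} {μ : W ⟶ U} {ν : W ⟶ V}
    {μ' : W' ⟶ U'} {ν' : W' ⟶ V'} {p p' : FInf F} {hp : p ∈ ZMor F ν} {hp' : p' ∈ ZMor F ν'}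
    (h : gm μ ν p hp = gm μ' ν' p' hp') (q : FInf F) :
    TranslatesP F μ ν p q ↔ TranslatesP F μ' ν' p' q := by
  obtain ⟨rfl, rfl⟩ := gm_eq_ends hF h
  obtain ⟨rfl, P, γ, γ', h1, h2, h3⟩ := (gm_eq_iff hF).1 h
  rw [← transP_refine hF.1 hF.2.2 γ h3, ← transP_refine hF.1 hF.2.2 γ' (h2 ▸ h3), h1, h2]

end Germs

/-! ### The topology of `G_F` -/

section Topology

variable {F : E ⥤ B}

attribute [local instance] gTopology

theorem isOpen_ZPair {W U V : E} (μ : W ⟶ U) (ν : W ⟶ V) : IsOpen (ZPair F μ ν) :=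
  TopologicalSpace.isOpen_generateFrom_of_mem ⟨W, U, V, μ, ν, rfl⟩

theorem ZPair_refine (hF : IsKPF F) {P W U V : E} (γ : P ⟶ W) (μ : W ⟶ U) (ν : W ⟶ V) :
    ZPair F (γ ≫ μ) (γ ≫ ν) ⊆ ZPair F μ ν := by
  intro g hg
  obtain ⟨p, hp, rfl⟩ := mem_ZPair.1 hg
  exact mem_ZPair.2 ⟨p, _, gm_refine hF γ hp⟩

theorem gm_mem_ZPair {W U V : E} (μ : W ⟶ U) (ν : W ⟶ V) (p : FInf F) (hp : p ∈ ZMor F ν) :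
    gm μ ν p hp ∈ ZPair F μ ν := mem_ZPair.2 ⟨p, hp, rfl⟩

theorem gm_mem_refine (hF : IsKPF F) {P W U V : E} (γ : P ⟶ W) {μ : W ⟶ U} {ν : W ⟶ V}
    {p : FInf F} (hp : p ∈ ZMor F ν) (hp' : p ∈ ZMor F (γ ≫ ν)) :
    gm μ ν p hp ∈ ZPair F (γ ≫ μ) (γ ≫ ν) := by
  rw [← gm_refine hF γ hp']
  exact gm_mem_ZPair _ _ _ _

/-- The sets `Z(γμ, γν)` with `p ∈ Z(γν)` form a neighbourhood basis of `[μ, ν, p]`. -/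
theorem exists_basic (hF : IsKPF F) {O : Set (GF F)} (hO : IsOpen O) {W U V : E} {μ : W ⟶ U}
    {ν : W ⟶ V} {p : FInf F} {hp : p ∈ ZMor F ν} (hg : gm μ ν p hp ∈ O) :
    ∃ (P : E) (γ : P ⟶ W), p ∈ ZMor F (γ ≫ ν) ∧ ZPair F (γ ≫ μ) (γ ≫ ν) ⊆ O := by
  induction hO with
  | basic s hs =>
    obtain ⟨W', U', V', μ', ν', rfl⟩ := hs
    obtain ⟨p', hp', h⟩ := mem_ZPair.1 hg
    obtain ⟨rfl, rfl⟩ := gm_eq_ends hF h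
    obtain ⟨rfl, P, γ, γ', h1, h2, h3⟩ := (gm_eq_iff hF).1 h
    refine ⟨P, γ, h3, ?_⟩
    rw [h1, h2]
    exact ZPair_refine hF _ _ _
  | univ => exact ⟨W, 𝟙 W, by simpa using hp, Set.subset_univ _⟩
  | inter s t _ _ ihs iht =>
    obtain ⟨P, γ, h1, h2⟩ := ihs hg.1
    obtain ⟨P', γ', h1', h2'⟩ := iht hg.2
    obtain ⟨Q, α, α', e, h3⟩ := mem_directed_over hF.1 hF.2.2.1 h1 h1'
    refine ⟨Q, α ≫ γ, by simpa using h3, Set.subset_inter ?_ ?_⟩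
    · rw [Category.assoc, Category.assoc]
      exact (ZPair_refine hF _ _ _).trans h2
    · rw [e, Category.assoc, Category.assoc]
      exact (ZPair_refine hF _ _ _).trans h2'
  | sUnion S _ ih =>
    obtain ⟨s, hs, hgs⟩ := hg
    obtain ⟨P, γ, h1, h2⟩ := ih s hs hgs
    exact ⟨P, γ, h1, h2.trans (Set.subset_sUnion_of_mem hs)⟩

/-- Row-finiteness makes every ultrafilter on the infinite paths to `X` converge: it selects, for
each `b` into `F X`, exactly one of the finitely many lifts of `b`. -/
theorem ultrafilter_limit (hF : IsKPF F) (hrf : RowFinite F) (f : Ultrafilter (FInf F)) {X : E}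
    (hX : ZObj F X ∈ f) :
    ∃ p : FInf F, p.1 = X ∧ ∀ {Y : E} (μ : Y ⟶ X), p ∈ ZMor F μ ↔ ZMor F μ ∈ f := by
  obtain ⟨x, hx⟩ := path_mk hF.1 (X := X) (fun μ => ZMor F μ ∈ f)
    (fun α μ h => Filter.mem_of_superset h fun p hp => mem_prefix hF.1 hp)
    (by
      intro o
      have hfin := hrf X o.hom
      have hcov : (⋃ s ∈ {s : Σ Y : E, Y ⟶ X | ∃ h : F.obj s.1 = o.left,
          F.map s.2 = eqToHom h ≫ o.hom}, ZMor F s.2) ∈ f := by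
        refine Filter.mem_of_superset hX fun p hp => ?_
        change p.1 = X at hp
        obtain ⟨Y, μ, e, h⟩ := mem_extend hF.1 ((mem_id hF.1).2 hp) o.hom
        rw [Category.comp_id] at h
        obtain ⟨e1, e2⟩ := over_mk_inj e
        exact Set.mem_biUnion (x := ⟨Y, μ⟩) ⟨e1, e2⟩ h
      obtain ⟨⟨Y, μ⟩, ⟨h, e⟩, hs⟩ := (Ultrafilter.finite_biUnion_mem_iff hfin).1 hcov
      refine ⟨Y, μ, ?_, hs⟩
      dsimp only at e
      rw [e, over_mk_eqToHom]; rfl)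
    (by
      intro Y Y' μ μ' h h' e
      obtain ⟨p, hp, hp'⟩ := f.neBot.nonempty_of_mem (Filter.inter_mem h h')
      exact mem_unique hp hp' e)
  refine ⟨⟨X, x⟩, rfl, fun μ => ?_⟩
  rw [← hx]
  exact mem_iff (p := ⟨X, x⟩)

/-- An ultrafilter on `Z(μ, ν)` is pushed forward to `F^∞`, where it has a limit `p`; it then converges
to `[μ, ν, p]`, because every basic neighbourhood is cut out of `Z(μ, ν)` by a condition on the
source. -/
theorem isCompact_ZPair (hF : IsKPF F) (hrf : RowFinite F) {W U V : E} (μ : W ⟶ U)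
    (ν : W ⟶ V) : IsCompact (ZPair F μ ν) := by
  rw [isCompact_iff_ultrafilter_le_nhds]
  intro f hf
  rw [Filter.le_principal_iff] at hf
  have hsub : ZPair F μ ν ⊆ src hF ⁻¹' ZMor F ν := by
    intro g hg
    obtain ⟨p, hp, rfl⟩ := mem_ZPair.1 hg
    rwa [Set.mem_preimage, src_gm]
  obtain ⟨p, hpV, hp⟩ := ultrafilter_limit hF hrf (f.map (src hF)) (X := V)
    (Filter.mem_map.2 (Filter.mem_of_superset hf fun g hg => (hsub hg).1))
  have hpν : p ∈ ZMor F ν := (hp ν).2 (Filter.mem_map.2 (Filter.mem_of_superset hf hsub))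
  refine ⟨gm μ ν p hpν, gm_mem_ZPair _ _ _ _, ?_⟩
  rw [le_nhds_iff]
  intro s hs hso
  obtain ⟨P, γ, h1, h2⟩ := exists_basic hF hso hs
  have h3 : src hF ⁻¹' ZMor F (γ ≫ ν) ∈ f := (hp _).1 h1
  filter_upwards [hf, h3] with g hg hg'
  obtain ⟨q, hq, rfl⟩ := mem_ZPair.1 hg
  rw [Set.mem_preimage, src_gm] at hg'
  exact h2 (gm_mem_refine hF γ hq hg')

/-- Distinct elements are separated by basic sets. The essential case is that of a common path `p`
and a square in `B` relating the two pairs: if the lifts of the square along `p` had a common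
refinement at some nearby path, a path through that refinement would force the lifts, hence the
two germs at `p`, to coincide. -/
theorem t2 (hF : IsKPF F) : T2Space (GF F) := by
  refine ⟨fun g g' hne => ?_⟩
  obtain ⟨W, U, V, μ, ν, p, hp, rfl⟩ := gm_cases g
  obtain ⟨W', U', V', μ', ν', p', hp', rfl⟩ := gm_cases g'
  suffices h : ∃ (P P' : E) (γ : P ⟶ W) (γ' : P' ⟶ W'), p ∈ ZMor F (γ ≫ ν) ∧
      p' ∈ ZMor F (γ' ≫ ν') ∧ ∀ q hq hq', gm (γ ≫ μ) (γ ≫ ν) q hq ≠ gm (γ' ≫ μ') (γ' ≫ ν') q hq' by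
    obtain ⟨P, P', γ, γ', h1, h2, h3⟩ := h
    refine ⟨_, _, isOpen_ZPair (γ ≫ μ) (γ ≫ ν), isOpen_ZPair (γ' ≫ μ') (γ' ≫ ν'),
      gm_mem_refine hF _ _ h1, gm_mem_refine hF _ _ h2, ?_⟩
    rw [Set.disjoint_left]
    intro g hg hg'
    obtain ⟨q, hq, rfl⟩ := mem_ZPair.1 hg
    obtain ⟨q', hq', e⟩ := mem_ZPair.1 hg'
    obtain rfl : q = q' := by
      have := congrArg (src hF) e
      rwa [src_gm, src_gm] at this
    exact h3 q hq hq' e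
  by_cases hends : U' = U ∧ V' = V
  swap
  · exact ⟨W, W', 𝟙 _, 𝟙 _, by simpa using hp, by simpa using hp',
      fun q hq hq' e => hends (gm_eq_ends hF e)⟩
  obtain ⟨rfl, rfl⟩ := hends
  by_cases hpp : p = p'
  · subst hpp
    by_cases hab : ∃ (M : B) (a : M ⟶ F.obj W) (b : M ⟶ F.obj W'),
        a ≫ F.map μ = b ≫ F.map μ' ∧ a ≫ F.map ν = b ≫ F.map ν'
    swap
    · refine ⟨W, W', 𝟙 _, 𝟙 _, by simpa using hp, by simpa using hp', fun q hq hq' e => hab ?_⟩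
      obtain ⟨-, P, γ, γ', h1, h2, -⟩ := (gm_eq_iff hF).1 e
      rw [Category.id_comp, Category.id_comp] at h1 h2
      exact ⟨F.obj P, F.map γ, F.map γ', by rw [← F.map_comp, h1, F.map_comp],
        by rw [← F.map_comp, h2, F.map_comp]⟩
    -- lift the square in `B` along `p`; the two lifts have equal `ν`-part but distinct `μ`-part
    obtain ⟨M, a, b, hab1, hab2⟩ := hab
    obtain ⟨Y, α, e, hα⟩ := mem_extend hF.1 hp a
    obtain ⟨Y', α', e', hα'⟩ := mem_extend hF.1 hp' b
    have h1 : Over.mk (α ≫ ν) = Over.mk (α' ≫ ν') := by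
      apply mem_unique hα hα'
      rw [F.map_comp, F.map_comp, over_mk_comp e, over_mk_comp e', hab2]
    obtain ⟨rfl, h1⟩ := over_mk_inj h1
    rw [eqToHom_refl, Category.id_comp] at h1
    refine ⟨Y, Y, α, α', hα, hα', fun q hq hq' hqe => hne ?_⟩
    obtain ⟨-, P, δ, δ', h2, h3, -⟩ := (gm_eq_iff hF).1 hqe
    obtain ⟨z, hz⟩ := Z_nonempty hF (δ ≫ α ≫ μ)
    have h4 : Over.mk (α ≫ μ) = Over.mk (α' ≫ μ') := by
      apply mem_unique (mem_prefix hF.1 hz) (mem_prefix hF.1 (h2 ▸ hz))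
      rw [F.map_comp, F.map_comp, over_mk_comp e, over_mk_comp e', hab1]
    obtain ⟨_, h4⟩ := over_mk_inj h4
    exact (gm_eq_iff hF).2 ⟨rfl, Y, α, α', by simpa using h4, h1, hα⟩
  · -- a morphism on `p` and not on `p'`, against the lift of the same morphism of `B` on `p'`
    have hV : p.1 = p'.1 := hp.1.trans hp'.1.symm
    obtain ⟨Y, l, h1, h2⟩ : ∃ (Y : E) (l : Y ⟶ p.1), p ∈ ZMor F l ∧ p' ∉ ZMor F l := by
      by_contra hcon
      push Not at hcon
      exact hpp (finf_ext hF.1 hV fun μ hμ => hcon _ μ hμ)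
    obtain rfl : p.1 = V' := hp.1
    obtain ⟨Y', l', e, h3⟩ := mem_extend hF.1 ((mem_id hF.1).2 hV.symm) (F.map l)
    rw [Category.comp_id] at h3
    obtain ⟨P, γ, δ, c, h4⟩ := mem_directed hF.1 hF.2.2.1 hp h1
    obtain ⟨P', γ', δ', c', h4'⟩ := mem_directed hF.1 hF.2.2.1 hp' h3
    refine ⟨P, P', γ, γ', h4, h4', fun q hq hq' _ => h2 ?_⟩
    rw [c] at hq
    rw [c'] at hq'
    have h5 := mem_unique (mem_prefix hF.1 hq') (mem_prefix hF.1 hq) e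
    obtain ⟨rfl, h6⟩ := over_mk_inj h5
    rw [eqToHom_refl, Category.id_comp] at h6
    rwa [← h6]

theorem locallyCompact (hF : IsKPF F) (hrf : RowFinite F) : LocallyCompactSpace (GF F) := by
  refine ⟨fun g n hn => ?_⟩
  obtain ⟨O, hOn, hO, hg⟩ := mem_nhds_iff.1 hn
  obtain ⟨W, U, V, μ, ν, p, hp, rfl⟩ := gm_cases g
  obtain ⟨P, γ, h1, h2⟩ := exists_basic hF hO hg
  exact ⟨ZPair F (γ ≫ μ) (γ ≫ ν),
    (isOpen_ZPair _ _).mem_nhds (gm_mem_refine hF _ _ h1), h2.trans hOn, isCompact_ZPair hF hrf _ _⟩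

theorem totallyDisconnected (hF : IsKPF F) (hrf : RowFinite F) :
    TotallyDisconnectedSpace (GF F) := by
  have := t2 hF
  have : TotallySeparatedSpace (GF F) := by
    refine totallySeparatedSpace_iff_exists_isClopen.2 fun g g' hne => ?_
    obtain ⟨W, U, V, μ, ν, p, hp, rfl⟩ := gm_cases g
    obtain ⟨P, γ, h1, h2⟩ := exists_basic hF (isOpen_compl_singleton (x := g')) hne
    exact ⟨ZPair F (γ ≫ μ) (γ ≫ ν), ⟨(isCompact_ZPair hF hrf _ _).isClosed, isOpen_ZPair _ _⟩,
      gm_mem_refine hF _ _ h1, fun h => h2 h rfl⟩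
  infer_instance

/-- Composition on representatives, once the inner morphisms are refined to agree. -/
theorem mult_gm {mult : (ComposablePairs F).Elem → GF F} (hF : IsKPF F)
    (hmult : ∀ (g h k : PreG F)
      (hp : (Quot.mk (GERel F) g, Quot.mk (GERel F) h) ∈ ComposablePairs F),
      CompRel F g h k → mult ⟨_, hp⟩ = Quot.mk (GERel F) k)
    {P W W' U V T : E} {μ : W ⟶ U} {ν : W ⟶ V} {σ : W' ⟶ V} {τ : W' ⟶ T} {p y : FInf F}
    {hp : p ∈ ZMor F ν} {hy : y ∈ ZMor F τ} (hT : TranslatesP F σ τ y p) {γ : P ⟶ W}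
    {η : P ⟶ W'} (hc : γ ≫ ν = η ≫ σ) (h1 : p ∈ ZMor F (γ ≫ ν)) (h2 : y ∈ ZMor F (η ≫ τ))
    (c : (ComposablePairs F).Elem) (hcc : c.1 = (gm μ ν p hp, gm σ τ y hy)) :
    mult c = gm (γ ≫ μ) (η ≫ τ) y h2 := by
  obtain ⟨c, hcm⟩ := c
  dsimp only at hcc
  subst hcc
  obtain rfl : p.1 = V := hp.1
  obtain rfl : y.1 = T := hy.1
  apply hmult
  refine ⟨hT, P, γ, η, rfl, ?_, h1.2, h2.2, ?_⟩
  · simpa [pm] using hc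
  · exact (ger_iff hF).2 ((germ_equivalence hF).refl _)

theorem continuous_mult {mult : (ComposablePairs F).Elem → GF F} (hF : IsKPF F)
    (hmult : ∀ (g h k : PreG F)
      (hp : (Quot.mk (GERel F) g, Quot.mk (GERel F) h) ∈ ComposablePairs F),
      CompRel F g h k → mult ⟨_, hp⟩ = Quot.mk (GERel F) k) : Continuous mult := by
  rw [continuous_def]
  intro O hO
  rw [isOpen_iff_forall_mem_open]
  rintro c hcO
  obtain ⟨g, h, h1, h2, hT⟩ := c.2
  obtain ⟨W, U, V, μ, ν, x, m⟩ := g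
  obtain ⟨W', V', T, σ, τ, y, m'⟩ := h
  dsimp only at hT
  obtain rfl : V = V' := ((transP_iff hF.1).1 hT).2.1
  set p : FInf F := ⟨V, x⟩
  set q : FInf F := ⟨T, y⟩
  have hp : p ∈ ZMor F ν := ⟨rfl, m⟩
  have hq : q ∈ ZMor F τ := ⟨rfl, m'⟩
  have hT' := (transP_iff hF.1).1 hT
  have hpσ : p ∈ ZMor F σ := ((transP_iff hF.1).1 (transP_symm hF.1 hT)).1
  obtain ⟨P, γ, η, hc, h3⟩ := mem_directed hF.1 hF.2.2.1 hp hpσ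
  have h4 : q ∈ ZMor F (η ≫ τ) := (hT'.2.2 η).2 (hc ▸ h3)
  -- the product near `c` is computed by a common refinement `γ ≫ ν = η ≫ σ` along `p`
  have h5 := mult_gm hF hmult (hp := hp) (hy := hq) hT hc h3 h4 c (Prod.ext h1 h2)
  rw [Set.mem_preimage, h5] at hcO
  obtain ⟨Q, δ, h6, h7⟩ := exists_basic hF hO hcO
  have h8 : p ∈ ZMor F ((δ ≫ γ) ≫ ν) := by
    rw [Category.assoc, hc]
    simpa using (hT'.2.2 (δ ≫ η)).1 (by simpa using h6)
  have h6' : q ∈ ZMor F ((δ ≫ η) ≫ τ) := by simpa using h6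
  refine ⟨Subtype.val ⁻¹' (ZPair F ((δ ≫ γ) ≫ μ) ((δ ≫ γ) ≫ ν) ×ˢ
    ZPair F ((δ ≫ η) ≫ σ) ((δ ≫ η) ≫ τ)), ?_, ?_, ?_⟩
  · rintro d ⟨hd1, hd2⟩
    obtain ⟨p', hp', e1⟩ := mem_ZPair.1 hd1
    obtain ⟨q', hq', e2⟩ := mem_ZPair.1 hd2
    obtain ⟨g, h, k1, k2, kT⟩ := d.2
    have e3 : p' = pt g := by
      have := congrArg (src hF) (e1.symm.trans k1)
      rwa [src_gm] at this
    have hT2 : TranslatesP F ((δ ≫ η) ≫ σ) ((δ ≫ η) ≫ τ) q' p' := by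
      rw [e3]
      exact (transP_congr hF (hp' := pt_mem h) (e2.symm.trans k2) _).2 kT
    have h9 := mult_gm hF hmult (hp := hp') (hy := hq') hT2 (γ := 𝟙 Q) (η := 𝟙 Q)
      (by simp [hc]) (by simpa using hp') (by simpa using hq') d (Prod.ext e1 e2)
    rw [Set.mem_preimage, h9]
    apply h7
    simp only [Category.assoc, Category.id_comp]
    exact gm_mem_ZPair _ _ _ _
  · exact ((isOpen_ZPair _ _).prod (isOpen_ZPair _ _)).preimage continuous_subtype_val
  · refine ⟨?_, ?_⟩
    · rw [h1]; exact gm_mem_refine hF _ hp h8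
    · rw [h2]; exact gm_mem_refine hF _ hq h6'

theorem inv_gm {inv : GF F → GF F}
    (hinv : ∀ (g : PreG F) (x' : InfPath F g.U) (mem' : InPathOf g.μ x'),
      TranslatesP F g.μ g.ν ⟨g.V, g.x⟩ ⟨g.U, x'⟩ →
      inv (Quot.mk (GERel F) g) =
        Quot.mk (GERel F) ⟨g.W, g.V, g.U, g.ν, g.μ, x', mem'⟩)
    {W U V : E} {μ : W ⟶ U} {ν : W ⟶ V} {p q : FInf F} (hp : p ∈ ZMor F ν)
    (hq : q ∈ ZMor F μ) (hT : TranslatesP F μ ν p q) :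
    inv (gm μ ν p hp) = gm ν μ q hq := by
  obtain rfl : p.1 = V := hp.1
  obtain rfl : q.1 = U := hq.1
  exact hinv (pm μ ν p hp) q.2 hq.2 hT

theorem isHomeomorph_inv {inv : GF F → GF F} (hF : IsKPF F)
    (hinv : ∀ (g : PreG F) (x' : InfPath F g.U) (mem' : InPathOf g.μ x'),
      TranslatesP F g.μ g.ν ⟨g.V, g.x⟩ ⟨g.U, x'⟩ →
      inv (Quot.mk (GERel F) g) =
        Quot.mk (GERel F) ⟨g.W, g.V, g.U, g.ν, g.μ, x', mem'⟩) : IsHomeomorph inv := by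
  have hmem : ∀ {W U V : E} {μ : W ⟶ U} {ν : W ⟶ V} {p q : FInf F},
      TranslatesP F μ ν p q → q ∈ ZMor F μ := fun h =>
    ((transP_iff hF.1).1 (transP_symm hF.1 h)).1
  have hinvol : Function.Involutive inv := by
    intro g
    obtain ⟨W, U, V, μ, ν, p, hp, rfl⟩ := gm_cases g
    obtain ⟨q, hq⟩ := transP_exists hF μ hp
    rw [inv_gm hinv hp (hmem hq) hq, inv_gm hinv (hmem hq) hp (transP_symm hF.1 hq)]
  have hcont : Continuous inv := by
    rw [continuous_def]
    intro O hO
    rw [isOpen_iff_forall_mem_open]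
    intro g hg
    obtain ⟨W, U, V, μ, ν, p, hp, rfl⟩ := gm_cases g
    obtain ⟨q, hq⟩ := transP_exists hF μ hp
    rw [Set.mem_preimage, inv_gm hinv hp (hmem hq) hq] at hg
    obtain ⟨P, γ, h1, h2⟩ := exists_basic hF hO hg
    refine ⟨ZPair F (γ ≫ μ) (γ ≫ ν), ?_, isOpen_ZPair _ _,
      gm_mem_refine hF γ hp ((((transP_iff hF.1).1 hq).2.2 γ).2 h1)⟩
    intro g hg
    obtain ⟨p', hp', rfl⟩ := mem_ZPair.1 hg
    obtain ⟨q', hq'⟩ := transP_exists hF (γ ≫ μ) hp'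
    rw [Set.mem_preimage, inv_gm hinv hp' (hmem hq') hq']
    exact h2 (gm_mem_ZPair _ _ _ _)
  exact (Homeomorph.mk hinvol.toPerm hcont hcont).isHomeomorph

end Topology

theorem statement_18 (F : E ⥤ B) (hF : IsKPF F) (hrf : RowFinite F)
    (hcount : ∀ M : B, Countable (Σ u v : Over M, u ⟶ v))
    (mult : (ComposablePairs F).Elem → GF F)
    (hmult : ∀ (g h k : PreG F)
      (hp : (Quot.mk (GERel F) g, Quot.mk (GERel F) h) ∈ ComposablePairs F),
      CompRel F g h k → mult ⟨_, hp⟩ = Quot.mk (GERel F) k)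
    (inv : GF F → GF F)
    (hinv : ∀ (g : PreG F) (x' : InfPath F g.U) (mem' : InPathOf g.μ x'),
      TranslatesP F g.μ g.ν ⟨g.V, g.x⟩ ⟨g.U, x'⟩ →
      inv (Quot.mk (GERel F) g) =
        Quot.mk (GERel F) ⟨g.W, g.V, g.U, g.ν, g.μ, x', mem'⟩) :
    letI : TopologicalSpace (GF F) := gTopology F
    T2Space (GF F) ∧ LocallyCompactSpace (GF F) ∧
      TotallyDisconnectedSpace (GF F) ∧ Continuous mult ∧ IsHomeomorph inv := by
  exact ⟨t2 hF, locallyCompact hF hrf, totallyDisconnected hF hrf, continuous_mult hF hmult,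
    isHomeomorph_inv hF hinv⟩

end DCFpaper
end
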